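/- arXiv:1808.00587 — 2 statements merged into one kernel-verified Lean document; each statement's English description precedes it below -/
import Mathlib

section
/- Let ε', ε'' ∈ int(E) and let (X*(ε'), y*(ε'), S*(ε')) and (X*(ε''), y*(ε''), S*(ε'')) be maximally complementary solutions at ε' and ε'' respectively, and suppose π(ε') = π(ε''). Then for every ρ ∈ [0,1], writing ε_ρ = ρ ε' + (1−ρ) ε'', one has π(ε_ρ) = π(ε') = π(ε''), and the triple (ρ X*(ε') + (1−ρ) X*(ε''), ρ y*(ε') + (1−ρ) y*(ε''), ρ S*(ε') + (1−ρ) S*(ε'')) is a maximally complementary solution of (P_{ε_ρ}) and (D_{ε_ρ}). -/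
open Matrix Set

noncomputable section

variable {n m : ℕ}

/-- Feasibility for the primal SDO problem `(P_ε)` (the feasible set does not depend on `ε`). -/
def PrimalFeasible (A : Fin m → Matrix (Fin n) (Fin n) ℝ) (b : Fin m → ℝ)
    (X : Matrix (Fin n) (Fin n) ℝ) : Prop :=
  X.IsSymm ∧ (∀ i, ((A i) * X).trace = b i) ∧ X.PosSemidef

/-- Feasibility for the dual SDO problem `(D_ε)`. -/
def DualFeasible (C Cbar : Matrix (Fin n) (Fin n) ℝ)
    (A : Fin m → Matrix (Fin n) (Fin n) ℝ) (ε : ℝ)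
    (y : Fin m → ℝ) (S : Matrix (Fin n) (Fin n) ℝ) : Prop :=
  S.IsSymm ∧ (∑ i, y i • A i) + S = C + ε • Cbar ∧ S.PosSemidef

/-- The optimal value function `v(ε)` of `(P_ε)`, with values in `EReal`. -/
def vfun (C Cbar : Matrix (Fin n) (Fin n) ℝ) (A : Fin m → Matrix (Fin n) (Fin n) ℝ)
    (b : Fin m → ℝ) (ε : ℝ) : EReal :=
  sInf ((fun X => (((C + ε • Cbar) * X).trace : EReal)) '' {X | PrimalFeasible A b X})

/-- `E = {ε : v(ε) > -∞}`. -/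
def Eset (C Cbar : Matrix (Fin n) (Fin n) ℝ) (A : Fin m → Matrix (Fin n) (Fin n) ℝ)
    (b : Fin m → ℝ) : Set ℝ :=
  {ε | ⊥ < vfun C Cbar A b ε}

/-- The primal optimal set `P*(ε)`. -/
def PrimalOpt (C Cbar : Matrix (Fin n) (Fin n) ℝ) (A : Fin m → Matrix (Fin n) (Fin n) ℝ)
    (b : Fin m → ℝ) (ε : ℝ) : Set (Matrix (Fin n) (Fin n) ℝ) :=
  {X | PrimalFeasible A b X ∧ ∀ X', PrimalFeasible A b X' →
    ((C + ε • Cbar) * X).trace ≤ ((C + ε • Cbar) * X').trace}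

/-- The dual optimal set `D*(ε)`. -/
def DualOpt (C Cbar : Matrix (Fin n) (Fin n) ℝ) (A : Fin m → Matrix (Fin n) (Fin n) ℝ)
    (b : Fin m → ℝ) (ε : ℝ) : Set ((Fin m → ℝ) × Matrix (Fin n) (Fin n) ℝ) :=
  {p | DualFeasible C Cbar A ε p.1 p.2 ∧ ∀ y' S', DualFeasible C Cbar A ε y' S' →
    ∑ i, b i * y' i ≤ ∑ i, b i * p.1 i}

/-- A maximally complementary optimal solution: `X` lies in the relative interior of `P*(ε)`
and `(y, S)` in the relative interior of `D*(ε)`. -/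
def MaxComp (C Cbar : Matrix (Fin n) (Fin n) ℝ) (A : Fin m → Matrix (Fin n) (Fin n) ℝ)
    (b : Fin m → ℝ) (ε : ℝ) (X : Matrix (Fin n) (Fin n) ℝ) (y : Fin m → ℝ)
    (S : Matrix (Fin n) (Fin n) ℝ) : Prop :=
  X ∈ intrinsicInterior ℝ (PrimalOpt C Cbar A b ε) ∧
    (y, S) ∈ intrinsicInterior ℝ (DualOpt C Cbar A b ε)

/-- `π(ε) = π(ε')`: the optimal partitions at `ε` and `ε'` coincide, expressed through
maximally complementary solutions (`B = range X*`, `N = range S*`, `T` being determined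
by `B` and `N`). -/
def SamePartition (C Cbar : Matrix (Fin n) (Fin n) ℝ) (A : Fin m → Matrix (Fin n) (Fin n) ℝ)
    (b : Fin m → ℝ) (ε ε' : ℝ) : Prop :=
  ∃ X y S X' y' S', MaxComp C Cbar A b ε X y S ∧ MaxComp C Cbar A b ε' X' y' S' ∧
    LinearMap.range X.mulVecLin = LinearMap.range X'.mulVecLin ∧
    LinearMap.range S.mulVecLin = LinearMap.range S'.mulVecLin

/-- The standing assumptions: symmetric data, linearly independent constraint matrices and
the interior point condition at `ε = 0`. -/
def StandingAssumptions (C Cbar : Matrix (Fin n) (Fin n) ℝ)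
    (A : Fin m → Matrix (Fin n) (Fin n) ℝ) (b : Fin m → ℝ) : Prop :=
  C.IsSymm ∧ Cbar.IsSymm ∧ (∀ i, (A i).IsSymm) ∧ LinearIndependent ℝ A ∧
    ∃ X y S, PrimalFeasible A b X ∧ X.PosDef ∧ DualFeasible C Cbar A 0 y S ∧ S.PosDef

/-- The invariancy set of `ε̄`. -/
def InvSet (C Cbar : Matrix (Fin n) (Fin n) ℝ) (A : Fin m → Matrix (Fin n) (Fin n) ℝ)
    (b : Fin m → ℝ) (εbar : ℝ) : Set ℝ :=
  {ε | ε ∈ interior (Eset C Cbar A b) ∧ SamePartition C Cbar A b ε εbar}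

/-- `dim B(ε) = dim B(ε')` and `dim N(ε) = dim N(ε')`, expressed through maximally
complementary solutions. -/
def DimsMatch (C Cbar : Matrix (Fin n) (Fin n) ℝ) (A : Fin m → Matrix (Fin n) (Fin n) ℝ)
    (b : Fin m → ℝ) (ε ε' : ℝ) : Prop :=
  ∀ X y S X' y' S', MaxComp C Cbar A b ε X y S → MaxComp C Cbar A b ε' X' y' S' →
    Module.finrank ℝ (LinearMap.range X.mulVecLin) =
        Module.finrank ℝ (LinearMap.range X'.mulVecLin) ∧
      Module.finrank ℝ (LinearMap.range S.mulVecLin) =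
        Module.finrank ℝ (LinearMap.range S'.mulVecLin)

/-- A transition point: a singleton invariancy set such that every neighborhood contains a
parameter at which `dim B` or `dim N` differs. -/
def IsTransitionPoint (C Cbar : Matrix (Fin n) (Fin n) ℝ) (A : Fin m → Matrix (Fin n) (Fin n) ℝ)
    (b : Fin m → ℝ) (εbar : ℝ) : Prop :=
  εbar ∈ interior (Eset C Cbar A b) ∧
    (∀ ε ∈ interior (Eset C Cbar A b), ε ≠ εbar → ¬ SamePartition C Cbar A b ε εbar) ∧
    ∀ ξ : ℝ, 0 < ξ → ∃ ε ∈ Set.Ioo (εbar - ξ) (εbar + ξ) ∩ interior (Eset C Cbar A b),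
      ¬ DimsMatch C Cbar A b ε εbar

/-- Existence of a strictly complementary optimal solution at `ε`. -/
def HasStrictComp (C Cbar : Matrix (Fin n) (Fin n) ℝ) (A : Fin m → Matrix (Fin n) (Fin n) ℝ)
    (b : Fin m → ℝ) (ε : ℝ) : Prop :=
  ∃ X y S, X ∈ PrimalOpt C Cbar A b ε ∧ (y, S) ∈ DualOpt C Cbar A b ε ∧ (X + S).PosDef

/-- Nonsingularity of the Jacobian `J(X, y, S)` of the optimality system, as a linear map on
`S^n × ℝ^m × S^n`: only the trivial symmetric triple is mapped to zero. -/
def JNonsingular (A : Fin m → Matrix (Fin n) (Fin n) ℝ)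
    (X S : Matrix (Fin n) (Fin n) ℝ) : Prop :=
  ∀ (DX DS : Matrix (Fin n) (Fin n) ℝ) (Dy : Fin m → ℝ), DX.IsSymm → DS.IsSymm →
    (∀ i, ((A i) * DX).trace = 0) → ((∑ i, Dy i • A i) + DS = 0) →
    (DX * S + S * DX + X * DS + DS * X = 0) → DX = 0 ∧ Dy = 0 ∧ DS = 0

/-- Primal nondegeneracy of a primal feasible `X`. -/
def PrimalNondeg (A : Fin m → Matrix (Fin n) (Fin n) ℝ)
    (X : Matrix (Fin n) (Fin n) ℝ) : Prop :=
  ∃ (r : ℕ) (M₁ : Matrix (Fin n) (Fin r) ℝ) (M₂ : Matrix (Fin n) (Fin (n - r)) ℝ),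
    M₁ᵀ * M₁ = 1 ∧ M₂ᵀ * M₂ = 1 ∧ M₁ᵀ * M₂ = 0 ∧
    LinearMap.range M₁.mulVecLin = LinearMap.range X.mulVecLin ∧
    LinearIndependent ℝ (fun i =>
      Matrix.fromBlocks (M₁ᵀ * (A i) * M₁) (M₁ᵀ * (A i) * M₂) (M₂ᵀ * (A i) * M₁) 0)

/-- Dual nondegeneracy of a dual feasible `(y, S)` (the condition involves only `S`). -/
def DualNondeg (A : Fin m → Matrix (Fin n) (Fin n) ℝ)
    (S : Matrix (Fin n) (Fin n) ℝ) : Prop :=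
  ∃ (k : ℕ) (N₁ : Matrix (Fin n) (Fin k) ℝ),
    N₁ᵀ * N₁ = 1 ∧ LinearMap.range N₁.mulVecLin = LinearMap.ker S.mulVecLin ∧
    ∀ W : Matrix (Fin k) (Fin k) ℝ, W.IsSymm →
      W ∈ Submodule.span ℝ (Set.range fun i => N₁ᵀ * (A i) * N₁)

/-- A central solution with parameter `μ` for the problems `(P_ε)` and `(D_ε)`. -/
def CentralSol (C Cbar : Matrix (Fin n) (Fin n) ℝ) (A : Fin m → Matrix (Fin n) (Fin n) ℝ)
    (b : Fin m → ℝ) (ε μ : ℝ) (X : Matrix (Fin n) (Fin n) ℝ) (y : Fin m → ℝ)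
    (S : Matrix (Fin n) (Fin n) ℝ) : Prop :=
  PrimalFeasible A b X ∧ DualFeasible C Cbar A ε y S ∧
    X * S = μ • (1 : Matrix (Fin n) (Fin n) ℝ)

/-- The Frobenius norm of a matrix. -/
def frobNorm {α β : Type*} [Fintype α] [Fintype β] (M : Matrix α β ℝ) : ℝ :=
  Real.sqrt (∑ i, ∑ j, (M i j) ^ 2)

/-- The spectral norm (induced 2-norm) of a square matrix. -/
def specNorm {N : ℕ} (M : Matrix (Fin N) (Fin N) ℝ) : ℝ :=
  ‖LinearMap.toContinuousLinearMap (Matrix.toEuclideanLin M)‖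

/-- The smallest eigenvalue of a symmetric matrix, via the Rayleigh quotient. -/
def lamMin {k : ℕ} (M : Matrix (Fin k) (Fin k) ℝ) : ℝ :=
  sInf {r : ℝ | ∃ x : Fin k → ℝ, (∑ i, (x i) ^ 2) = 1 ∧ r = x ⬝ᵥ M.mulVec x}

/-- `θ^μ`: the operator norm of the inverse of the Jacobian `J(X, y, S)` on
`S^n × ℝ^m × S^n`, characterized as the least constant `t ≥ 0` with
`‖(ΔX, Δy, ΔS)‖ ≤ t * ‖J(X,y,S)(ΔX, Δy, ΔS)‖` for all symmetric `ΔX`, `ΔS`. -/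
def thetaMu (A : Fin m → Matrix (Fin n) (Fin n) ℝ)
    (X S : Matrix (Fin n) (Fin n) ℝ) : ℝ :=
  sInf {t : ℝ | 0 ≤ t ∧ ∀ (DX DS : Matrix (Fin n) (Fin n) ℝ) (Dy : Fin m → ℝ),
    DX.IsSymm → DS.IsSymm →
    Real.sqrt (frobNorm DX ^ 2 + (∑ i, (Dy i) ^ 2) + frobNorm DS ^ 2) ≤
      t * Real.sqrt ((∑ i, (((A i) * DX).trace) ^ 2) +
        frobNorm ((∑ i, Dy i • A i) + DS) ^ 2 +
        frobNorm ((1 / 2 : ℝ) • (DX * S + S * DX + X * DS + DS * X)) ^ 2)}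

/-- A nonlinearity interval: a non-singleton open subinterval of `int(E)`, of maximal length,
on which `dim B(·)` and `dim N(·)` are constant while the optimal partition `π(·)` varies. -/
def IsNonlinearityInterval (C Cbar : Matrix (Fin n) (Fin n) ℝ)
    (A : Fin m → Matrix (Fin n) (Fin n) ℝ) (b : Fin m → ℝ) (I : Set ℝ) : Prop :=
  I ⊆ interior (Eset C Cbar A b) ∧ IsOpen I ∧ I.OrdConnected ∧
    (∃ a ∈ I, ∃ c ∈ I, a ≠ c) ∧
    (∀ ε ∈ I, ∀ ε' ∈ I, DimsMatch C Cbar A b ε ε') ∧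
    ¬ (∀ ε ∈ I, ∀ ε' ∈ I, SamePartition C Cbar A b ε ε') ∧
    ∀ I' : Set ℝ, I ⊆ I' → I' ⊆ interior (Eset C Cbar A b) → IsOpen I' → I'.OrdConnected →
      (∀ ε ∈ I', ∀ ε' ∈ I', DimsMatch C Cbar A b ε ε') → I' = I

end

/-!
A point `x` of a finite-dimensional convex set `s` lies in the relative interior iff the feasible
directions of `s` at `x` are closed under negation. Hence `x` is a relative interior point of the
face of `s` on which a linear functional `l` is maximal iff every feasible direction `d` satisfies
`l d ≤ 0`, and `l d = 0` only if `-d` is feasible as well. This condition depends on `x` only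
through its feasible directions, and if it holds for `l₁` and `l₂` at points with the same feasible
directions, it holds for their nonnegative combinations.

For positive semidefinite matrices the feasible directions are determined by the range, because
`range Q ≤ range P` implies that `P - t Q` is positive semidefinite for some `t > 0`. So optimal
solutions with equal ranges, and their convex combinations, have the same feasible directions for
their respective primal (or dual) problems, although the dual feasible set varies with `ε`. The
convex combination keeps the optimal partition because `range (P + Q) = range P ⊔ range Q`.
-/

section FeasibleDirections

variable {E : Type*} [AddCommGroup E] [Module ℝ E] {s : Set E} {x y d e : E} {r a c : ℝ}

/-- The cone of feasible directions (radial cone) of `s` at `x`: the directions along which one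
can move a positive distance from `x` and land in `s`. Two points of a convex set lie in the
relative interior of the same face iff they have the same feasible directions, and this is how
faces are compared here. -/
def feasibleDirections (s : Set E) (x : E) : Set E :=
  {d | ∃ t : ℝ, 0 < t ∧ x + t • d ∈ s}

lemma sub_mem_feasibleDirections (hy : y ∈ s) : y - x ∈ feasibleDirections s x :=
  ⟨1, one_pos, by simpa using hy⟩

lemma smul_mem_feasibleDirections (hr : 0 < r) (hd : d ∈ feasibleDirections s x) :
    r • d ∈ feasibleDirections s x := by
  obtain ⟨t, ht, hxd⟩ := hd
  refine ⟨t / r, by positivity, ?_⟩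
  rwa [smul_smul, div_mul_cancel₀ t hr.ne']

lemma smul_mem_feasibleDirections_iff (hr : 0 < r) :
    r • d ∈ feasibleDirections s x ↔ d ∈ feasibleDirections s x := by
  refine ⟨fun h => ?_, smul_mem_feasibleDirections hr⟩
  simpa [smul_smul, hr.ne'] using smul_mem_feasibleDirections (inv_pos.2 hr) h

lemma add_mem_feasibleDirections (hs : Convex ℝ s) (hd : d ∈ feasibleDirections s x)
    (he : e ∈ feasibleDirections s x) : d + e ∈ feasibleDirections s x := by
  obtain ⟨t, ht, hxd⟩ := hd
  obtain ⟨r, hr, hxe⟩ := he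
  refine ⟨t * r / (t + r), by positivity, ?_⟩
  have hmem := hs hxd hxe (a := r / (t + r)) (b := t / (t + r)) (by positivity) (by positivity)
    (by field_simp; ring)
  convert hmem using 1
  match_scalars <;> field_simp
  ring

lemma feasibleDirections_inter_subset (hs : Convex ℝ s) (ha : 0 ≤ a) (hc : 0 ≤ c)
    (hac : a + c = 1) :
    feasibleDirections s x ∩ feasibleDirections s y ⊆ feasibleDirections s (a • x + c • y) := by
  rintro d ⟨⟨t, ht, hxd⟩, ⟨r, hr, hyd⟩⟩
  have hpos : 0 < a * t + c * r := by
    rcases ha.eq_or_lt with rfl | ha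
    · simpa [show c = 1 by linarith] using hr
    · positivity
  refine ⟨a * t + c * r, hpos, ?_⟩
  convert hs hxd hyd ha hc hac using 1
  module

lemma feasibleDirections_combo (hs : Convex ℝ s) (hx : x ∈ s)
    (hxy : feasibleDirections s x = feasibleDirections s y) (ha : 0 ≤ a) (hc : 0 ≤ c)
    (hac : a + c = 1) :
    feasibleDirections s (a • x + c • y) = feasibleDirections s x := by
  refine Subset.antisymm ?_ fun d hd => feasibleDirections_inter_subset hs ha hc hac ⟨hd, hxy ▸ hd⟩
  rintro d ⟨t, ht, hd⟩
  have hz : x - (a • x + c • y) ∈ feasibleDirections s x := by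
    rcases hc.eq_or_lt with rfl | hc
    · simpa [show a = 1 by linarith] using sub_mem_feasibleDirections (x := x) hx
    · have hxy' : x - y ∈ feasibleDirections s x := hxy ▸ sub_mem_feasibleDirections hx
      convert smul_mem_feasibleDirections hc hxy' using 1
      rw [← eq_sub_iff_add_eq] at hac
      subst hac
      module
  rw [← smul_mem_feasibleDirections_iff ht]
  simpa using add_mem_feasibleDirections hs (sub_mem_feasibleDirections (x := x) hd) hz

lemma feasibleDirections_toExposed [TopologicalSpace E] {l : StrongDual ℝ E}
    (hx : x ∈ l.toExposed s) :
    feasibleDirections (l.toExposed s) x = {d ∈ feasibleDirections s x | l d = 0} := by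
  ext d
  constructor
  · rintro ⟨t, ht, hd, hmax⟩
    have hle : l (x + t • d) ≤ l x := hx.2 _ hd
    have hge : l x ≤ l (x + t • d) := hmax x hx.1
    have hzero : t * l d = 0 := by simpa using hle.antisymm hge
    exact ⟨⟨t, ht, hd⟩, (mul_eq_zero.1 hzero).resolve_left ht.ne'⟩
  · rintro ⟨⟨t, ht, hd⟩, hzero⟩
    exact ⟨t, ht, hd, by simpa [hzero] using hx.2⟩

lemma mem_toExposed_iff_forall_feasibleDirections [TopologicalSpace E] {l : StrongDual ℝ E} :
    x ∈ l.toExposed s ↔ x ∈ s ∧ ∀ d ∈ feasibleDirections s x, l d ≤ 0 := by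
  refine and_congr_right fun _ => ⟨?_, fun h y hy => ?_⟩
  · rintro h d ⟨t, ht, hd⟩
    have hle : t * l d ≤ 0 := by simpa using h _ hd
    exact nonpos_of_mul_nonpos_right hle ht
  · simpa using h _ (sub_mem_feasibleDirections hy)

end FeasibleDirections

section IntrinsicInterior

open scoped Topology

lemma mem_intrinsicInterior_iff_mem_nhdsWithin {𝕜 V P : Type*} [Ring 𝕜] [AddCommGroup V]
    [Module 𝕜 V] [TopologicalSpace P] [AddTorsor V P] {s : Set P} {x : P} :
    x ∈ intrinsicInterior 𝕜 s ↔ x ∈ s ∧ s ∈ 𝓝[affineSpan 𝕜 s] x := by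
  rw [mem_intrinsicInterior]
  constructor
  · rintro ⟨y, hy, rfl⟩
    have hys : (y : P) ∈ s := mem_preimage.1 (interior_subset hy)
    exact ⟨hys, preimage_coe_mem_nhds_subtype.1 (mem_interior_iff_mem_nhds.1 hy)⟩
  · rintro ⟨hx, hmem⟩
    exact ⟨⟨x, subset_affineSpan 𝕜 s hx⟩,
      mem_interior_iff_mem_nhds.2 (preimage_coe_mem_nhds_subtype.2 hmem), rfl⟩

variable {E : Type*} [AddCommGroup E] [Module ℝ E] [TopologicalSpace E] [IsTopologicalAddGroup E]
  [ContinuousSMul ℝ E] {s : Set E} {x d w y : E}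

lemma tendsto_lineMap_nhdsWithin_affineSubspace {Q : AffineSubspace ℝ E} (hx : x ∈ Q) (hy : y ∈ Q)
    (r : ℝ) : Filter.Tendsto (AffineMap.lineMap x y) (𝓝 r) (𝓝[Q] (AffineMap.lineMap x y r)) :=
  tendsto_nhdsWithin_iff.2 ⟨AffineMap.lineMap_continuous.tendsto r,
    .of_forall fun t => AffineMap.lineMap_mem t hx hy⟩

lemma neg_mem_feasibleDirections_of_mem_intrinsicInterior (hx : x ∈ intrinsicInterior ℝ s)
    (hd : d ∈ feasibleDirections s x) : -d ∈ feasibleDirections s x := by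
  obtain ⟨t, ht, hxd⟩ := hd
  obtain ⟨hxs, hnhds⟩ := mem_intrinsicInterior_iff_mem_nhdsWithin.1 hx
  have htendsto := tendsto_lineMap_nhdsWithin_affineSubspace (subset_affineSpan ℝ s hxs)
    (subset_affineSpan ℝ s hxd) 0
  rw [AffineMap.lineMap_apply_zero] at htendsto
  obtain ⟨r, hr, hr0⟩ :=
    (((htendsto.eventually hnhds).filter_mono nhdsWithin_le_nhds).and
      (self_mem_nhdsWithin (a := (0 : ℝ)) (s := Iio 0))).exists
  refine ⟨-r * t, mul_pos (neg_pos.2 hr0) ht, ?_⟩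
  convert mem_preimage.1 hr using 1
  rw [AffineMap.lineMap_apply_module]
  module

lemma openSegment_subset_intrinsicInterior (hs : Convex ℝ s) (hw : w ∈ intrinsicInterior ℝ s)
    (hy : y ∈ s) : openSegment ℝ w y ⊆ intrinsicInterior ℝ s := by
  rintro _ ⟨a, c, ha, hc, hac, rfl⟩
  obtain ⟨hws, hnhds⟩ := mem_intrinsicInterior_iff_mem_nhdsWithin.1 hw
  refine mem_intrinsicInterior_iff_mem_nhdsWithin.2 ⟨hs hws hy ha.le hc.le hac, ?_⟩
  let φ : E → E := fun p => AffineMap.lineMap y p a⁻¹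
  have hφ_eq (p : E) : φ p = (1 - a⁻¹) • y + a⁻¹ • p := AffineMap.lineMap_apply_module ..
  obtain rfl : c = 1 - a := by linarith
  have hφ_combo (p : E) : a • φ p + (1 - a) • y = p := by
    rw [hφ_eq]
    match_scalars <;> field_simp
    ring
  have hφw : φ (a • w + (1 - a) • y) = w := by
    rw [hφ_eq]
    match_scalars <;> field_simp
    ring
  have hφ : Filter.Tendsto φ (𝓝[affineSpan ℝ s] (a • w + (1 - a) • y))
      (𝓝[affineSpan ℝ s] w) := by
    refine tendsto_nhdsWithin_iff.2 ⟨?_, ?_⟩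
    · have hcont : Continuous φ := by
        simp only [funext hφ_eq]
        fun_prop
      simpa only [hφw] using
        (hcont.tendsto (a • w + (1 - a) • y)).mono_left nhdsWithin_le_nhds
    · filter_upwards [self_mem_nhdsWithin] with p hp
      exact AffineMap.lineMap_mem _ (subset_affineSpan ℝ s hy) hp
  filter_upwards [hφ hnhds] with p hp
  simpa only [hφ_combo] using hs hp hy ha.le hc.le hac

variable [T2Space E] [FiniteDimensional ℝ E]

lemma nonempty_intrinsicInterior_of_convex (hs : Convex ℝ s) (hne : s.Nonempty) :
    (intrinsicInterior ℝ s).Nonempty := by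
  have himage : (intrinsicInterior ℝ (toEuclidean '' s)).Nonempty :=
    (hne.image toEuclidean).intrinsicInterior (hs.linear_image toEuclidean.toLinearMap)
  rw [← ContinuousLinearEquiv.coe_toContinuousAffineEquiv,
    ContinuousAffineEquiv.intrinsicInterior_image] at himage
  exact himage.of_image

lemma mem_intrinsicInterior_iff_forall_neg_mem_feasibleDirections (hs : Convex ℝ s) :
    x ∈ intrinsicInterior ℝ s ↔
      x ∈ s ∧ ∀ d ∈ feasibleDirections s x, -d ∈ feasibleDirections s x := by
  refine ⟨fun hx => ⟨intrinsicInterior_subset hx, fun d =>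
    neg_mem_feasibleDirections_of_mem_intrinsicInterior hx⟩, fun ⟨hx, hneg⟩ => ?_⟩
  obtain ⟨w, hw⟩ := nonempty_intrinsicInterior_of_convex hs ⟨x, hx⟩
  obtain ⟨t, ht, hy⟩ := hneg _ (sub_mem_feasibleDirections (intrinsicInterior_subset hw))
  refine openSegment_subset_intrinsicInterior hs hw hy
    ⟨t / (1 + t), 1 / (1 + t), by positivity, by positivity, by field_simp; ring, ?_⟩
  match_scalars <;> field_simp
  ring

lemma mem_intrinsicInterior_toExposed_iff (hs : Convex ℝ s) {l : StrongDual ℝ E} :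
    x ∈ intrinsicInterior ℝ (l.toExposed s) ↔
      x ∈ s ∧ ∀ d ∈ feasibleDirections s x, l d ≤ 0 ∧ (l d = 0 → -d ∈ feasibleDirections s x) := by
  rw [mem_intrinsicInterior_iff_forall_neg_mem_feasibleDirections
    (ContinuousLinearMap.toExposed.isExposed.convex hs)]
  constructor
  · rintro ⟨hx, hneg⟩
    rw [feasibleDirections_toExposed hx] at hneg
    obtain ⟨hxs, hle⟩ := mem_toExposed_iff_forall_feasibleDirections.1 hx
    exact ⟨hxs, fun d hd => ⟨hle d hd, fun hzero => (hneg d ⟨hd, hzero⟩).1⟩⟩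
  · rintro ⟨hxs, h⟩
    have hx : x ∈ l.toExposed s :=
      mem_toExposed_iff_forall_feasibleDirections.2 ⟨hxs, fun d hd => (h d hd).1⟩
    refine ⟨hx, ?_⟩
    rw [feasibleDirections_toExposed hx]
    exact fun d ⟨hd, hzero⟩ => ⟨(h d hd).2 hzero, by simpa using hzero⟩

lemma mem_intrinsicInterior_toExposed_combo {s₁ s₂ : Set E} {x₁ x₂ : E} {l₁ l₂ : StrongDual ℝ E}
    {a c : ℝ} (hs₁ : Convex ℝ s₁) (hs₂ : Convex ℝ s₂) (hs : Convex ℝ s)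
    (hx₁ : x₁ ∈ intrinsicInterior ℝ (l₁.toExposed s₁))
    (hx₂ : x₂ ∈ intrinsicInterior ℝ (l₂.toExposed s₂)) (hx : x ∈ s)
    (h₁ : feasibleDirections s x = feasibleDirections s₁ x₁)
    (h₂ : feasibleDirections s x = feasibleDirections s₂ x₂)
    (ha : 0 ≤ a) (hc : 0 ≤ c) (hac : 0 < a + c) :
    x ∈ intrinsicInterior ℝ ((a • l₁ + c • l₂).toExposed s) := by
  rw [mem_intrinsicInterior_toExposed_iff hs₁, ← h₁] at hx₁
  rw [mem_intrinsicInterior_toExposed_iff hs₂, ← h₂] at hx₂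
  refine (mem_intrinsicInterior_toExposed_iff hs).2 ⟨hx, fun d hd => ?_⟩
  obtain ⟨hle₁, hneg₁⟩ := hx₁.2 d hd
  obtain ⟨hle₂, hneg₂⟩ := hx₂.2 d hd
  have hle₁' : a * l₁ d ≤ 0 := mul_nonpos_of_nonneg_of_nonpos ha hle₁
  have hle₂' : c * l₂ d ≤ 0 := mul_nonpos_of_nonneg_of_nonpos hc hle₂
  refine ⟨by simpa using add_nonpos hle₁' hle₂', fun hzero => ?_⟩
  obtain ⟨hzero₁, hzero₂⟩ : a * l₁ d = 0 ∧ c * l₂ d = 0 := by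
    have : a * l₁ d + c * l₂ d = 0 := by simpa using hzero
    constructor <;> linarith
  rcases ha.eq_or_lt with rfl | ha
  · exact hneg₂ ((mul_eq_zero.1 hzero₂).resolve_left (by linarith))
  · exact hneg₁ ((mul_eq_zero.1 hzero₁).resolve_left ha.ne')

end IntrinsicInterior

section ConicProgram

variable {E F V : Type*} [AddCommGroup F] [Module ℝ F] [AddCommGroup V] [Module ℝ V]

/-- The feasible set `{x | g x = β, σ x ∈ K}` of an optimization problem in conic form. The map
`σ` singles out the part of the variable that is constrained to `K`: it is the identity for the
primal problem and the projection `(y, S) ↦ S` for the dual one. -/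
def conicFeasibleSet [AddCommGroup E] [Module ℝ E] (K : Set V) (σ : E →ₗ[ℝ] V) (g : E →ₗ[ℝ] F)
    (β : F) : Set E :=
  {x | g x = β ∧ σ x ∈ K}

section

variable [AddCommGroup E] [Module ℝ E] {K : Set V} {σ : E →ₗ[ℝ] V} {g : E →ₗ[ℝ] F}

lemma combo_mem_conicFeasibleSet (hK : Convex ℝ K) {β₁ β₂ : F} {x₁ x₂ : E}
    (hx₁ : x₁ ∈ conicFeasibleSet K σ g β₁) (hx₂ : x₂ ∈ conicFeasibleSet K σ g β₂) {a c : ℝ}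
    (ha : 0 ≤ a) (hc : 0 ≤ c) (hac : a + c = 1) :
    a • x₁ + c • x₂ ∈ conicFeasibleSet K σ g (a • β₁ + c • β₂) := by
  refine ⟨by simp [hx₁.1, hx₂.1], ?_⟩
  simpa using hK hx₁.2 hx₂.2 ha hc hac

lemma convex_conicFeasibleSet (hK : Convex ℝ K) (β : F) : Convex ℝ (conicFeasibleSet K σ g β) := by
  intro x hx y hy a c ha hc hac
  simpa [Convex.combo_self hac] using combo_mem_conicFeasibleSet hK hx hy ha hc hac

lemma feasibleDirections_conicFeasibleSet {β : F} {x : E} (hx : x ∈ conicFeasibleSet K σ g β) :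
    feasibleDirections (conicFeasibleSet K σ g β) x =
      {d | g d = 0 ∧ σ d ∈ feasibleDirections K (σ x)} := by
  ext d
  constructor
  · rintro ⟨t, ht, hg, hσ⟩
    exact ⟨by simpa [hx.1, ht.ne'] using hg, t, ht, by simpa using hσ⟩
  · rintro ⟨hg, t, ht, hσ⟩
    exact ⟨t, ht, by simp [hx.1, hg], by simpa using hσ⟩

end

theorem combo_mem_intrinsicInterior_toExposed_conicFeasibleSet [AddCommGroup E] [Module ℝ E]
    [TopologicalSpace E] [IsTopologicalAddGroup E] [ContinuousSMul ℝ E] [T2Space E]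
    [FiniteDimensional ℝ E] {K : Set V} {σ : E →ₗ[ℝ] V} {g : E →ₗ[ℝ] F}
    (hK : Convex ℝ K) {β₁ β₂ : F} {l₁ l₂ : StrongDual ℝ E} {x₁ x₂ : E}
    (hx₁ : x₁ ∈ intrinsicInterior ℝ (l₁.toExposed (conicFeasibleSet K σ g β₁)))
    (hx₂ : x₂ ∈ intrinsicInterior ℝ (l₂.toExposed (conicFeasibleSet K σ g β₂)))
    (hface : feasibleDirections K (σ x₁) = feasibleDirections K (σ x₂))
    {a c : ℝ} (ha : 0 ≤ a) (hc : 0 ≤ c) (hac : a + c = 1) :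
    a • x₁ + c • x₂ ∈ intrinsicInterior ℝ
      ((a • l₁ + c • l₂).toExposed (conicFeasibleSet K σ g (a • β₁ + c • β₂))) := by
  have hfeas₁ : x₁ ∈ conicFeasibleSet K σ g β₁ := (intrinsicInterior_subset hx₁).1
  have hfeas₂ : x₂ ∈ conicFeasibleSet K σ g β₂ := (intrinsicInterior_subset hx₂).1
  have hfeas := combo_mem_conicFeasibleSet hK hfeas₁ hfeas₂ ha hc hac
  have hface' : feasibleDirections K (σ (a • x₁ + c • x₂)) = feasibleDirections K (σ x₁) := by
    simpa using feasibleDirections_combo hK hfeas₁.2 hface ha hc hac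
  refine mem_intrinsicInterior_toExposed_combo (convex_conicFeasibleSet hK β₁)
    (convex_conicFeasibleSet hK β₂) (convex_conicFeasibleSet hK _) hx₁ hx₂ hfeas ?_ ?_ ha hc
    (hac ▸ one_pos)
  · rw [feasibleDirections_conicFeasibleSet hfeas, feasibleDirections_conicFeasibleSet hfeas₁,
      hface']
  · rw [feasibleDirections_conicFeasibleSet hfeas, feasibleDirections_conicFeasibleSet hfeas₂,
      hface', hface]

end ConicProgram

section PosSemidef

open scoped ComplexOrder

lemma exists_eq_mul_of_range_mulVecLin_le {R k l m : Type*} [CommSemiring R] [Fintype k]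
    [Fintype l] {M : Matrix m k R} {N : Matrix m l R}
    (h : LinearMap.range N.mulVecLin ≤ LinearMap.range M.mulVecLin) :
    ∃ T : Matrix k l R, N = M * T := by
  classical
  choose t ht using fun j => h (LinearMap.mem_range_self N.mulVecLin (Pi.single j 1))
  refine ⟨(Matrix.of t)ᵀ, ?_⟩
  ext i j
  have hcol : (M *ᵥ t j) i = N i j := by simpa using congrFun (ht j) i
  exact hcol.symm

variable {𝕜 n : Type*} [RCLike 𝕜]

lemma convex_setOf_posSemidef : Convex ℝ {P : Matrix n n 𝕜 | P.PosSemidef} :=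
  fun _ hP _ hQ _ _ ha hc _ => (hP.smul ha).add (hQ.smul hc)

lemma exists_posSemidef_one_sub_smul [Finite n] [DecidableEq n] {H : Matrix n n 𝕜}
    (hH : H.IsHermitian) : ∃ t : ℝ, 0 < t ∧ (1 - t • H).PosSemidef := by
  cases nonempty_fintype n
  open scoped MatrixOrder Matrix.Norms.L2Operator in
  have hsa : IsSelfAdjoint H := hH
  obtain ⟨r, hr⟩ := (ContinuousFunctionalCalculus.isCompact_spectrum (R := ℝ) H).bddAbove
  have hle : (algebraMap ℝ _ |r| - H).PosSemidef := Matrix.le_iff.1 <|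
    le_algebraMap_of_spectrum_le fun x hx => (hr hx).trans (le_abs_self r)
  have hpos : 0 < |r| + 1 := by positivity
  refine ⟨(|r| + 1)⁻¹, inv_pos.2 hpos, ?_⟩
  have hsum : 1 - (|r| + 1)⁻¹ • H = (|r| + 1)⁻¹ • ((algebraMap ℝ _ |r| - H) + 1) := by
    rw [Algebra.algebraMap_eq_smul_one]
    match_scalars <;> field_simp
  rw [hsum]
  exact (hle.add Matrix.PosSemidef.one).smul (inv_nonneg.2 hpos.le)

variable [Fintype n]

lemma range_mulVecLin_mul_conjTranspose_self {k : Type*} [Fintype k] (M : Matrix n k 𝕜) :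
    LinearMap.range (M * Mᴴ).mulVecLin = LinearMap.range M.mulVecLin := by
  refine Submodule.eq_of_le_of_finrank_eq ?_ M.rank_self_mul_conjTranspose
  rw [Matrix.mulVecLin_mul]
  exact LinearMap.range_comp_le_range _ _

variable {P Q : Matrix n n 𝕜}

lemma exists_eq_mul_conjTranspose_self_of_posSemidef (hP : P.PosSemidef) :
    ∃ R : Matrix n n 𝕜, P = R * Rᴴ := by
  classical
  open scoped MatrixOrder Matrix.Norms.L2Operator in
  exact CStarAlgebra.nonneg_iff_eq_mul_star_self.1 hP.nonneg

lemma range_mulVecLin_add_of_posSemidef (hP : P.PosSemidef) (hQ : Q.PosSemidef) :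
    LinearMap.range (P + Q).mulVecLin =
      LinearMap.range P.mulVecLin ⊔ LinearMap.range Q.mulVecLin := by
  obtain ⟨R, rfl⟩ := exists_eq_mul_conjTranspose_self_of_posSemidef hP
  obtain ⟨B, rfl⟩ := exists_eq_mul_conjTranspose_self_of_posSemidef hQ
  have hcols : R * Rᴴ + B * Bᴴ = Matrix.fromCols R B * (Matrix.fromCols R B)ᴴ := by
    rw [Matrix.conjTranspose_fromCols_eq_fromRows_conjTranspose, Matrix.fromCols_mul_fromRows]
  have hcol : (Matrix.fromCols R B).col = Sum.elim R.col B.col := by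
    ext (j | j) i <;> rfl
  rw [hcols]
  simp only [range_mulVecLin_mul_conjTranspose_self]
  simp only [Matrix.range_mulVecLin, hcol, Set.Sum.elim_range, Submodule.span_union]

lemma range_mulVecLin_combo_of_posSemidef (hP : P.PosSemidef) (hQ : Q.PosSemidef)
    (h : LinearMap.range P.mulVecLin = LinearMap.range Q.mulVecLin) {a c : ℝ} (ha : 0 ≤ a)
    (hc : 0 ≤ c) (hac : 0 < a + c) :
    LinearMap.range (a • P + c • Q).mulVecLin = LinearMap.range P.mulVecLin := by
  have hrange {r : ℝ} (hr : 0 < r) (M : Matrix n n 𝕜) :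
      LinearMap.range (r • M).mulVecLin = LinearMap.range M.mulVecLin := by
    have hsmul : (r • M).mulVecLin = (r : 𝕜) • M.mulVecLin := by
      ext v i
      simp [RCLike.real_smul_eq_coe_mul]
    rw [hsmul, LinearMap.range_smul _ _ (RCLike.ofReal_ne_zero.2 hr.ne')]
  rw [range_mulVecLin_add_of_posSemidef (hP.smul ha) (hQ.smul hc)]
  rcases ha.eq_or_lt with rfl | ha'
  · rw [hrange (by linarith : 0 < c), h, zero_smul, Matrix.mulVecLin_zero, LinearMap.range_zero,
      bot_sup_eq]
  rcases hc.eq_or_lt with rfl | hc'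
  · rw [hrange ha', zero_smul, Matrix.mulVecLin_zero, LinearMap.range_zero, sup_bot_eq]
  · rw [hrange ha', hrange hc', h, sup_idem]

lemma exists_posSemidef_sub_smul_of_range_le (hP : P.PosSemidef) (hQ : Q.PosSemidef)
    (h : LinearMap.range Q.mulVecLin ≤ LinearMap.range P.mulVecLin) :
    ∃ t : ℝ, 0 < t ∧ (P - t • Q).PosSemidef := by
  classical
  obtain ⟨R, rfl⟩ := exists_eq_mul_conjTranspose_self_of_posSemidef hP
  obtain ⟨B, rfl⟩ := exists_eq_mul_conjTranspose_self_of_posSemidef hQ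
  simp only [range_mulVecLin_mul_conjTranspose_self] at h
  obtain ⟨T, rfl⟩ := exists_eq_mul_of_range_mulVecLin_le h
  obtain ⟨t, ht, hpsd⟩ :=
    exists_posSemidef_one_sub_smul (Matrix.isHermitian_mul_conjTranspose_self T)
  refine ⟨t, ht, ?_⟩
  convert hpsd.mul_mul_conjTranspose_same R using 1
  simp only [Matrix.conjTranspose_mul, Matrix.mul_sub, Matrix.sub_mul, Matrix.mul_one,
    Matrix.mul_smul, Matrix.smul_mul, Matrix.mul_assoc]

lemma feasibleDirections_posSemidef_subset_of_range_le (hP : P.PosSemidef) (hQ : Q.PosSemidef)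
    (h : LinearMap.range Q.mulVecLin ≤ LinearMap.range P.mulVecLin) :
    feasibleDirections {M : Matrix n n 𝕜 | M.PosSemidef} Q ⊆
      feasibleDirections {M : Matrix n n 𝕜 | M.PosSemidef} P := by
  rintro D ⟨r, hr, hQD⟩
  obtain ⟨t, ht, hPQ⟩ := exists_posSemidef_sub_smul_of_range_le hP hQ h
  refine ⟨t * r, by positivity, ?_⟩
  have hsum : P + (t * r) • D = (P - t • Q) + t • (Q + r • D) := by module
  rw [hsum]
  exact hPQ.add (Matrix.PosSemidef.smul hQD ht.le)

lemma feasibleDirections_posSemidef_congr (hP : P.PosSemidef) (hQ : Q.PosSemidef)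
    (h : LinearMap.range P.mulVecLin = LinearMap.range Q.mulVecLin) :
    feasibleDirections {M : Matrix n n 𝕜 | M.PosSemidef} P =
      feasibleDirections {M : Matrix n n 𝕜 | M.PosSemidef} Q :=
  Subset.antisymm (feasibleDirections_posSemidef_subset_of_range_le hQ hP h.le)
    (feasibleDirections_posSemidef_subset_of_range_le hP hQ h.ge)

end PosSemidef

section SemidefiniteProgram

variable {n m : ℕ} {C Cbar : Matrix (Fin n) (Fin n) ℝ} {A : Fin m → Matrix (Fin n) (Fin n) ℝ}
  {b : Fin m → ℝ}

/-- The trace pairing `⟨M, X⟩ = trace (M X)`, as a continuous linear functional of `X` depending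
linearly on `M`. -/
noncomputable def tracePairing (ι : Type*) [Fintype ι] :
    Matrix ι ι ℝ →ₗ[ℝ] StrongDual ℝ (Matrix ι ι ℝ) :=
  LinearMap.toContinuousLinearMap.toLinearMap ∘ₗ
    (LinearMap.mul ℝ (Matrix ι ι ℝ)).compr₂ (Matrix.traceLinearMap ι ℝ ℝ)

lemma tracePairing_apply {ι : Type*} [Fintype ι] (M X : Matrix ι ι ℝ) :
    tracePairing ι M X = (M * X).trace := rfl

/-- The constraint map `X ↦ (⟨Aⁱ, X⟩)ᵢ` of the primal problem. -/
noncomputable def primalConstraint (A : Fin m → Matrix (Fin n) (Fin n) ℝ) :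
    Matrix (Fin n) (Fin n) ℝ →ₗ[ℝ] Fin m → ℝ :=
  LinearMap.pi fun i => (tracePairing (Fin n) (A i)).toLinearMap

/-- The constraint map `(y, S) ↦ ∑ᵢ yᵢ Aⁱ + S` of the dual problem. -/
noncomputable def dualConstraint (A : Fin m → Matrix (Fin n) (Fin n) ℝ) :
    (Fin m → ℝ) × Matrix (Fin n) (Fin n) ℝ →ₗ[ℝ] Matrix (Fin n) (Fin n) ℝ :=
  (Fintype.linearCombination ℝ A).coprod LinearMap.id

/-- The objective `(y, S) ↦ bᵀ y` of the dual problem. -/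
noncomputable def dualObjective (n : ℕ) (b : Fin m → ℝ) :
    StrongDual ℝ ((Fin m → ℝ) × Matrix (Fin n) (Fin n) ℝ) :=
  (dotProductBilin ℝ ℝ b).toContinuousLinearMap ∘L ContinuousLinearMap.fst ℝ _ _

lemma primalFeasible_iff {X : Matrix (Fin n) (Fin n) ℝ} :
    PrimalFeasible A b X ↔
      X ∈ conicFeasibleSet {M | M.PosSemidef} LinearMap.id (primalConstraint A) b := by
  have hsymm (h : X.PosSemidef) : X.IsSymm := Matrix.isHermitian_iff_isSymm.1 h.isHermitian
  simp only [PrimalFeasible, conicFeasibleSet, primalConstraint, funext_iff, mem_ofPred_eq]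
  exact ⟨fun h => h.2, fun h => ⟨hsymm h.2, h⟩⟩

lemma dualFeasible_iff {ε : ℝ} {p : (Fin m → ℝ) × Matrix (Fin n) (Fin n) ℝ} :
    DualFeasible C Cbar A ε p.1 p.2 ↔
      p ∈ conicFeasibleSet {M | M.PosSemidef} (LinearMap.snd ℝ _ _) (dualConstraint A)
        (C + ε • Cbar) := by
  have hsymm (h : p.2.PosSemidef) : p.2.IsSymm := Matrix.isHermitian_iff_isSymm.1 h.isHermitian
  exact ⟨fun h => h.2, fun h => ⟨hsymm h.2, h⟩⟩

lemma primalOpt_eq_toExposed (ε : ℝ) :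
    PrimalOpt C Cbar A b ε =
      (tracePairing (Fin n) (-(C + ε • Cbar))).toExposed
        (conicFeasibleSet {M | M.PosSemidef} LinearMap.id (primalConstraint A) b) := by
  ext X
  simp only [PrimalOpt, ContinuousLinearMap.toExposed, primalFeasible_iff, map_neg,
    _root_.neg_apply, tracePairing_apply, neg_le_neg_iff, mem_ofPred_eq]

lemma dualOpt_eq_toExposed (ε : ℝ) :
    DualOpt C Cbar A b ε =
      (dualObjective n b).toExposed
        (conicFeasibleSet {M | M.PosSemidef} (LinearMap.snd ℝ _ _) (dualConstraint A)
          (C + ε • Cbar)) := by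
  ext p
  simp only [DualOpt, ContinuousLinearMap.toExposed, ← dualFeasible_iff, mem_ofPred_eq, Prod.forall]
  rfl

variable {ε₁ ε₂ a c : ℝ}

lemma add_combo_smul_eq_combo {V : Type*} [AddCommGroup V] [Module ℝ V] (u v : V)
    (hac : a + c = 1) :
    u + (a * ε₁ + c * ε₂) • v = a • (u + ε₁ • v) + c • (u + ε₂ • v) := by
  obtain rfl : c = 1 - a := by linarith
  module

theorem combo_mem_intrinsicInterior_primalOpt {X₁ X₂ : Matrix (Fin n) (Fin n) ℝ}
    (hX₁ : X₁ ∈ intrinsicInterior ℝ (PrimalOpt C Cbar A b ε₁))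
    (hX₂ : X₂ ∈ intrinsicInterior ℝ (PrimalOpt C Cbar A b ε₂))
    (hrange : LinearMap.range X₁.mulVecLin = LinearMap.range X₂.mulVecLin)
    (ha : 0 ≤ a) (hc : 0 ≤ c) (hac : a + c = 1) :
    a • X₁ + c • X₂ ∈ intrinsicInterior ℝ (PrimalOpt C Cbar A b (a * ε₁ + c * ε₂)) := by
  have hface := feasibleDirections_posSemidef_congr (intrinsicInterior_subset hX₁).1.2.2
    (intrinsicInterior_subset hX₂).1.2.2 hrange
  rw [primalOpt_eq_toExposed] at hX₁ hX₂ ⊢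
  have hcombo := combo_mem_intrinsicInterior_toExposed_conicFeasibleSet
    (convex_setOf_posSemidef (𝕜 := ℝ)) hX₁ hX₂ hface ha hc hac
  rwa [Convex.combo_self hac, ← map_smul, ← map_smul, ← map_add, smul_neg, smul_neg, ← neg_add,
    ← add_combo_smul_eq_combo C Cbar hac] at hcombo

theorem combo_mem_intrinsicInterior_dualOpt {p₁ p₂ : (Fin m → ℝ) × Matrix (Fin n) (Fin n) ℝ}
    (hp₁ : p₁ ∈ intrinsicInterior ℝ (DualOpt C Cbar A b ε₁))
    (hp₂ : p₂ ∈ intrinsicInterior ℝ (DualOpt C Cbar A b ε₂))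
    (hrange : LinearMap.range p₁.2.mulVecLin = LinearMap.range p₂.2.mulVecLin)
    (ha : 0 ≤ a) (hc : 0 ≤ c) (hac : a + c = 1) :
    a • p₁ + c • p₂ ∈ intrinsicInterior ℝ (DualOpt C Cbar A b (a * ε₁ + c * ε₂)) := by
  have hface := feasibleDirections_posSemidef_congr (intrinsicInterior_subset hp₁).1.2.2
    (intrinsicInterior_subset hp₂).1.2.2 hrange
  rw [dualOpt_eq_toExposed] at hp₁ hp₂ ⊢
  have hcombo := combo_mem_intrinsicInterior_toExposed_conicFeasibleSet
    (convex_setOf_posSemidef (𝕜 := ℝ)) hp₁ hp₂ hface ha hc hac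
  rwa [Convex.combo_self hac, ← add_combo_smul_eq_combo C Cbar hac] at hcombo

end SemidefiniteProgram

theorem stmt0_general {n m : ℕ} (C Cbar : Matrix (Fin n) (Fin n) ℝ)
    (A : Fin m → Matrix (Fin n) (Fin n) ℝ) (b : Fin m → ℝ) (ε' ε'' : ℝ)
    (X' X'' S' S'' : Matrix (Fin n) (Fin n) ℝ) (y' y'' : Fin m → ℝ)
    (hmc' : MaxComp C Cbar A b ε' X' y' S')
    (hmc'' : MaxComp C Cbar A b ε'' X'' y'' S'')
    (hB : LinearMap.range X'.mulVecLin = LinearMap.range X''.mulVecLin)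
    (hN : LinearMap.range S'.mulVecLin = LinearMap.range S''.mulVecLin)
    (ρ : ℝ) (hρ : ρ ∈ Set.Icc (0 : ℝ) 1) :
    MaxComp C Cbar A b (ρ * ε' + (1 - ρ) * ε'')
        (ρ • X' + (1 - ρ) • X'') (ρ • y' + (1 - ρ) • y'') (ρ • S' + (1 - ρ) • S'') ∧
      LinearMap.range (ρ • X' + (1 - ρ) • X'').mulVecLin = LinearMap.range X'.mulVecLin ∧
      LinearMap.range (ρ • S' + (1 - ρ) • S'').mulVecLin = LinearMap.range S'.mulVecLin := by
  obtain ⟨hX', hS'⟩ := hmc'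
  obtain ⟨hX'', hS''⟩ := hmc''
  have hρ₁ : 0 ≤ 1 - ρ := sub_nonneg.2 hρ.2
  have hsum : ρ + (1 - ρ) = 1 := add_sub_cancel ρ 1
  have hpos : 0 < ρ + (1 - ρ) := by rw [hsum]; exact one_pos
  exact ⟨⟨combo_mem_intrinsicInterior_primalOpt hX' hX'' hB hρ.1 hρ₁ hsum,
      combo_mem_intrinsicInterior_dualOpt hS' hS'' hN hρ.1 hρ₁ hsum⟩,
    range_mulVecLin_combo_of_posSemidef (intrinsicInterior_subset hX').1.2.2
      (intrinsicInterior_subset hX'').1.2.2 hB hρ.1 hρ₁ hpos,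
    range_mulVecLin_combo_of_posSemidef (intrinsicInterior_subset hS').1.2.2
      (intrinsicInterior_subset hS'').1.2.2 hN hρ.1 hρ₁ hpos⟩

/-- convex combinations along an invariancy set are maximally complementary and
leave the optimal partition unchanged. -/
theorem stmt0 {n m : ℕ} (C Cbar : Matrix (Fin n) (Fin n) ℝ)
    (A : Fin m → Matrix (Fin n) (Fin n) ℝ) (b : Fin m → ℝ)
    (hSA : StandingAssumptions C Cbar A b)
    (ε' ε'' : ℝ) (hε' : ε' ∈ interior (Eset C Cbar A b))
    (hε'' : ε'' ∈ interior (Eset C Cbar A b))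
    (X' X'' S' S'' : Matrix (Fin n) (Fin n) ℝ) (y' y'' : Fin m → ℝ)
    (hmc' : MaxComp C Cbar A b ε' X' y' S')
    (hmc'' : MaxComp C Cbar A b ε'' X'' y'' S'')
    (hB : LinearMap.range X'.mulVecLin = LinearMap.range X''.mulVecLin)
    (hN : LinearMap.range S'.mulVecLin = LinearMap.range S''.mulVecLin)
    (ρ : ℝ) (hρ : ρ ∈ Set.Icc (0 : ℝ) 1) :
    MaxComp C Cbar A b (ρ * ε' + (1 - ρ) * ε'')
        (ρ • X' + (1 - ρ) • X'') (ρ • y' + (1 - ρ) • y'') (ρ • S' + (1 - ρ) • S'') ∧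
      LinearMap.range (ρ • X' + (1 - ρ) • X'').mulVecLin = LinearMap.range X'.mulVecLin ∧
      LinearMap.range (ρ • S' + (1 - ρ) • S'').mulVecLin = LinearMap.range S'.mulVecLin :=
  stmt0_general C Cbar A b ε' ε'' X' X'' S' S'' y' y'' hmc' hmc'' hB hN ρ hρ
end

section
/- Let ε̄ ∈ int(E), let Q_B be a matrix whose columns form an orthonormal basis of B(ε̄) and Q_N a matrix whose columns form an orthonormal basis of N(ε̄). Then for ε ∈ int(E), π(ε) = π(ε̄) if and only if there exist a symmetric positive definite matrix U_X of size dim B(ε̄), a vector y ∈ ℝ^m, and a symmetric positive definite matrix U_S of size dim N(ε̄) such that ⟨A^i, Q_B U_X Q_B^T⟩ = b_i for i = 1,…,m and Σ_i y_i A^i + Q_N U_S Q_N^T = C + ε C̄. -/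
open Matrix Set

/-
Under Slater's condition, conic duality (here a consequence of M. Riesz' extension theorem) makes
any pair of optimal solutions complementary: `S * X = 0`. Once one complementary pair is known, the
optimal sets are spectrahedra, the primal one being `{Y feasible | S * Y = 0}` and symmetrically for
the dual. The relative interior of a spectrahedron consists of its points of largest range, so the
optimal partition is read off from ranges.

Complementarity depends only on the ranges of `X` and `S`. Hence feasible `X` and `S` at `ε` with
the ranges of a maximally complementary pair at `ε̄` are complementary, thus optimal. They are
again maximally complementary: the primal optimal sets at `ε` and `ε̄` coincide, and a dual optimal
solution at `ε` of larger range could be used to enlarge the range of the one at `ε̄`. Finally, if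
the columns of `Q` are orthonormal, the positive semidefinite matrices with the range of `Q` are the
`Q * U * Qᴴ` with `U` positive definite.
-/

section RelativeInterior

variable {E : Type*} [AddCommGroup E] [Module ℝ E] [TopologicalSpace E]
  [IsTopologicalAddGroup E] [ContinuousSMul ℝ E] {P : Set E} {x y z : E}

theorem exists_pos_add_smul_sub_mem_of_mem_intrinsicInterior
    (hx : x ∈ intrinsicInterior ℝ P) (hy : y ∈ P) : ∃ t : ℝ, 0 < t ∧ x + t • (x - y) ∈ P := by
  obtain ⟨x, hxP, rfl⟩ := mem_intrinsicInterior.1 hx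
  let ray : ℝ → affineSpan ℝ P := fun t ↦ ⟨x + t • (x - y), by
    simpa [add_comm] using AffineSubspace.smul_vsub_vadd_mem (affineSpan ℝ P) t x.2
      (subset_affineSpan ℝ P hy) x.2⟩
  have hray : Continuous ray := by fun_prop
  have hray_zero : ray 0 = x := Subtype.ext (by simp [ray])
  have hnear : ∀ᶠ t in nhds (0 : ℝ), ray t ∈ interior ((↑) ⁻¹' P : Set (affineSpan ℝ P)) :=
    hray.continuousAt.eventually_mem (isOpen_interior.mem_nhds (hray_zero ▸ hxP))
  obtain ⟨t, hmem, ht⟩ :=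
    ((hnear.filter_mono nhdsWithin_le_nhds).and (self_mem_nhdsWithin (s := Ioi (0 : ℝ)))).exists
  exact ⟨t, ht, interior_subset (s := ((↑) ⁻¹' P : Set (affineSpan ℝ P))) hmem⟩

theorem mem_intrinsicInterior_of_add_smul_sub_mem (hP : Convex ℝ P)
    (hz : z ∈ intrinsicInterior ℝ P) {t : ℝ} (ht : 0 < t) (hx : x + t • (x - z) ∈ P) :
    x ∈ intrinsicInterior ℝ P := by
  obtain ⟨z, hzP, rfl⟩ := mem_intrinsicInterior.1 hz
  set w : E := x + t • (x - z) with hw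
  have hw_span : w ∈ affineSpan ℝ P := subset_affineSpan ℝ P hx
  have hxw : x = w + (t / (1 + t)) • (z - w) := by
    rw [hw]
    match_scalars <;> field_simp <;> ring
  have hx_span : x ∈ affineSpan ℝ P := by
    rw [hxw]
    simpa [add_comm] using
      AffineSubspace.smul_vsub_vadd_mem (affineSpan ℝ P) (t / (1 + t)) z.2 hw_span hw_span
  -- The inverse of the homothety with centre `w` carrying `z` to `x`.
  let pull : affineSpan ℝ P → affineSpan ℝ P := fun p ↦ ⟨w + ((1 + t) / t) • (p - w), by
    simpa [add_comm] using
      AffineSubspace.smul_vsub_vadd_mem (affineSpan ℝ P) ((1 + t) / t) p.2 hw_span hw_span⟩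
  have hpull : Continuous pull := by fun_prop
  have hpull_x : pull ⟨x, hx_span⟩ = z := Subtype.ext <| by
    simp only [pull, hw]
    match_scalars <;> field_simp <;> ring
  have hratio : t / (1 + t) ∈ Icc (0 : ℝ) 1 :=
    ⟨by positivity, (div_le_one (by positivity)).2 (by linarith)⟩
  have hpull_interior : pull ⁻¹' interior ((↑) ⁻¹' P) ⊆ ((↑) ⁻¹' P : Set (affineSpan ℝ P)) := by
    intro p hp
    have hp_eq : (p : E) = w + (t / (1 + t)) • ((pull p : E) - w) := by
      simp only [pull]
      match_scalars <;> field_simp <;> ring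
    rw [mem_preimage, hp_eq]
    exact hP.add_smul_sub_mem hx (interior_subset (s := ((↑) ⁻¹' P : Set (affineSpan ℝ P))) hp)
      hratio
  refine mem_intrinsicInterior.2 ⟨⟨x, hx_span⟩, ?_, rfl⟩
  refine interior_maximal hpull_interior (isOpen_interior.preimage hpull) ?_
  rwa [mem_preimage, hpull_x]

theorem mem_intrinsicInterior_iff_forall_exists_add_smul_sub_mem {E : Type*}
    [NormedAddCommGroup E] [NormedSpace ℝ E] [FiniteDimensional ℝ E] {P : Set E} {x : E}
    (hP : Convex ℝ P) :
    x ∈ intrinsicInterior ℝ P ↔ x ∈ P ∧ ∀ y ∈ P, ∃ t : ℝ, 0 < t ∧ x + t • (x - y) ∈ P := by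
  refine ⟨fun hx ↦ ⟨intrinsicInterior_subset hx, fun y ↦
    exists_pos_add_smul_sub_mem_of_mem_intrinsicInterior hx⟩, fun ⟨hxP, hx⟩ ↦ ?_⟩
  obtain ⟨z, hz⟩ := Set.Nonempty.intrinsicInterior hP ⟨x, hxP⟩
  obtain ⟨t, ht, hxt⟩ := hx z (intrinsicInterior_subset hz)
  exact mem_intrinsicInterior_of_add_smul_sub_mem hP hz ht hxt

end RelativeInterior

section PosSemidef

open scoped ComplexOrder

variable {𝕜 m n k : Type*} [RCLike 𝕜]

theorem range_mulVecLin_le_iff_exists_mul {R : Type*} [CommSemiring R] [Fintype n] [Fintype k]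
    {A : Matrix m n R} {B : Matrix m k R} :
    LinearMap.range A.mulVecLin ≤ LinearMap.range B.mulVecLin ↔ ∃ W : Matrix k n R, A = B * W := by
  classical
  constructor
  · intro h
    have hcol (j : n) : ∃ v : k → R, B *ᵥ v = A.col j :=
      h ⟨Pi.single j 1, by simp⟩
    choose V hV using hcol
    exact ⟨(of V)ᵀ, by ext i j; exact (congrFun (hV j) i).symm⟩
  · rintro ⟨W, rfl⟩
    rw [mulVecLin_mul]
    exact LinearMap.range_comp_le_range _ _

theorem range_mulVecLin_smul {α R : Type*} [CommSemiring R] [GroupWithZero α]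
    [DistribMulAction α R] [SMulCommClass α R R] [Fintype n] {c : α} (hc : c ≠ 0)
    (A : Matrix m n R) :
    LinearMap.range (c • A).mulVecLin = LinearMap.range A.mulVecLin := by
  classical
  have smul_le (a : α) (M : Matrix m n R) :
      LinearMap.range (a • M).mulVecLin ≤ LinearMap.range M.mulVecLin :=
    range_mulVecLin_le_iff_exists_mul.2 ⟨a • 1, by rw [Matrix.mul_smul, Matrix.mul_one]⟩
  refine le_antisymm (smul_le c A) ?_
  simpa only [inv_smul_smul₀ hc] using smul_le c⁻¹ (c • A)

theorem mul_eq_zero_of_range_mulVecLin_le {R : Type*} [CommSemiring R] {l : Type*}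
    [Fintype n] [Fintype m] [Fintype k] {A : Matrix l m R} {X : Matrix m k R} {Y : Matrix m n R}
    (hYX : LinearMap.range Y.mulVecLin ≤ LinearMap.range X.mulVecLin) (hAX : A * X = 0) :
    A * Y = 0 := by
  obtain ⟨W, rfl⟩ := range_mulVecLin_le_iff_exists_mul.1 hYX
  rw [← Matrix.mul_assoc, hAX, Matrix.zero_mul]

theorem mul_eq_zero_of_range_mulVecLin_le_of_isHermitian {R : Type*} [CommSemiring R] [StarRing R]
    [Fintype n] {A B : Matrix n n R} {X : Matrix n k R} (hA : A.IsHermitian) (hB : B.IsHermitian)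
    (hBA : LinearMap.range B.mulVecLin ≤ LinearMap.range A.mulVecLin) (hAX : A * X = 0) :
    B * X = 0 := by
  obtain ⟨W, hW⟩ := range_mulVecLin_le_iff_exists_mul.1 hBA
  rw [← hB.eq, hW, conjTranspose_mul, hA.eq, Matrix.mul_assoc, hAX, Matrix.mul_zero]

open scoped MatrixOrder in
theorem exists_pos_posSemidef_one_add_smul [Finite n] [DecidableEq n] {X : Matrix n n 𝕜}
    (hX : X.IsHermitian) : ∃ t : ℝ, 0 < t ∧ (1 + t • X).PosSemidef := by
  cases nonempty_fintype n
  have hsa : IsSelfAdjoint X := hX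
  obtain ⟨r, hr⟩ := (Matrix.finite_real_spectrum (A := X)).bddBelow
  have hrX : r • (1 : Matrix n n 𝕜) ≤ X := by
    rw [← Algebra.algebraMap_eq_smul_one]
    exact (algebraMap_le_iff_le_spectrum (a := X)).2 fun x hx ↦ hr hx
  have hshift : 0 ≤ (1 + |r|) • (1 : Matrix n n 𝕜) + X :=
    calc (0 : Matrix n n 𝕜) ≤ (1 + |r| + r) • 1 :=
          smul_nonneg (by linarith [neg_abs_le r]) zero_le_one
      _ = (1 + |r|) • 1 + r • 1 := add_smul ..
      _ ≤ (1 + |r|) • 1 + X := by gcongr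
  have ht : 0 < (1 + |r|)⁻¹ := by positivity
  refine ⟨(1 + |r|)⁻¹, ht, nonneg_iff_posSemidef.1 ?_⟩
  simpa [smul_smul, ht.ne'.symm, (inv_pos.1 ht).ne'] using smul_nonneg ht.le hshift

variable [Fintype n] {X Y A B : Matrix n n 𝕜}

open scoped MatrixOrder in
theorem posSemidef_iff_exists_eq_conjTranspose_mul_self :
    X.PosSemidef ↔ ∃ B : Matrix n n 𝕜, X = Bᴴ * B := by
  classical
  rw [← nonneg_iff_posSemidef]
  exact CStarAlgebra.nonneg_iff_eq_star_mul_self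

theorem exists_isHermitian_mul_mul_eq_self (hX : X.IsHermitian) :
    ∃ G : Matrix n n 𝕜, G.IsHermitian ∧ X * G * X = X := by
  classical
  have hsa : IsSelfAdjoint X := hX
  have hinv : ContinuousOn (fun x : ℝ ↦ x⁻¹) (spectrum ℝ X) :=
    Matrix.finite_real_spectrum.continuousOn _
  refine ⟨cfc (fun x : ℝ ↦ x⁻¹) X, cfc_predicate _ _, ?_⟩
  calc X * cfc (fun x : ℝ ↦ x⁻¹) X * X
      = cfc (fun x : ℝ ↦ x * x⁻¹ * x) X := by
        rw [cfc_mul _ _ X (by fun_prop) (by fun_prop), cfc_mul _ _ X (by fun_prop) hinv,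
          cfc_id' ℝ X]
    _ = X := by simp only [mul_inv_mul_cancel, cfc_id' ℝ X]

theorem exists_pos_posSemidef_sub_smul (hX : X.PosSemidef) (hY : Y.IsHermitian)
    (hYX : LinearMap.range Y.mulVecLin ≤ LinearMap.range X.mulVecLin) :
    ∃ t : ℝ, 0 < t ∧ (X - t • Y).PosSemidef := by
  classical
  obtain ⟨W, hW⟩ := range_mulVecLin_le_iff_exists_mul.1 hYX
  have hW' : Y = Wᴴ * X := by
    rw [← hY.eq, hW, conjTranspose_mul, hX.1.eq]
  obtain ⟨G, hG, hYGY⟩ := exists_isHermitian_mul_mul_eq_self hY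
  obtain ⟨B, hB⟩ := posSemidef_iff_exists_eq_conjTranspose_mul_self.1 hX
  set K : Matrix n n 𝕜 := B * (W * G * Wᴴ) * Bᴴ with hK
  have hK_herm : K.IsHermitian :=
    isHermitian_mul_mul_conjTranspose B (isHermitian_mul_mul_conjTranspose W hG)
  have hY_eq : Y = Bᴴ * K * B :=
    calc Y = Y * G * Y := hYGY.symm
      _ = X * W * G * (Wᴴ * X) := by rw [← hW, ← hW']
      _ = Bᴴ * K * B := by simp only [hB, hK, Matrix.mul_assoc]
  obtain ⟨t, ht, hpos⟩ := exists_pos_posSemidef_one_add_smul hK_herm.neg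
  refine ⟨t, ht, ?_⟩
  convert hpos.conjTranspose_mul_mul_same B using 1
  rw [hB, hY_eq]
  simp [sub_eq_add_neg, Matrix.mul_add, Matrix.add_mul]

theorem exists_pos_posSemidef_smul_add {n : Type*} [Finite n] {X Y : Matrix n n 𝕜}
    (hX : X.PosDef) (hY : Y.IsHermitian) : ∃ t : ℝ, 0 < t ∧ (t • X + Y).PosSemidef := by
  classical
  cases nonempty_fintype n
  have hYX : -Y = X * (X⁻¹ * -Y) :=
    (mul_nonsing_inv_cancel_left _ _ ((isUnit_iff_isUnit_det X).1 hX.isUnit)).symm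
  obtain ⟨t, ht, hpos⟩ := exists_pos_posSemidef_sub_smul hX.posSemidef hY.neg
    (range_mulVecLin_le_iff_exists_mul.2 ⟨_, hYX⟩)
  refine ⟨t⁻¹, inv_pos.2 ht, ?_⟩
  simpa [smul_smul, ht.ne'] using hpos.smul (inv_pos.2 ht).le

theorem trace_mul_nonneg_of_posSemidef (hA : A.PosSemidef) (hB : B.PosSemidef) :
    0 ≤ (A * B).trace := by
  obtain ⟨R, rfl⟩ := posSemidef_iff_exists_eq_conjTranspose_mul_self.1 hB
  rw [← Matrix.mul_assoc, trace_mul_comm, ← Matrix.mul_assoc]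
  exact (hA.mul_mul_conjTranspose_same R).trace_nonneg

theorem trace_mul_eq_zero_iff_of_posSemidef (hA : A.PosSemidef) (hB : B.PosSemidef) :
    (A * B).trace = 0 ↔ A * B = 0 := by
  refine ⟨fun h ↦ ?_, fun h ↦ by rw [h, trace_zero]⟩
  obtain ⟨P, rfl⟩ := posSemidef_iff_exists_eq_conjTranspose_mul_self.1 hA
  obtain ⟨R, rfl⟩ := posSemidef_iff_exists_eq_conjTranspose_mul_self.1 hB
  have htrace : ((P * Rᴴ)ᴴ * (P * Rᴴ)).trace = 0 := by
    rw [← h, conjTranspose_mul, conjTranspose_conjTranspose, ← Matrix.mul_assoc (Pᴴ * P),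
      trace_mul_comm _ R]
    simp only [Matrix.mul_assoc]
  have hPR : P * Rᴴ = 0 := trace_conjTranspose_mul_self_eq_zero_iff.1 htrace
  rw [Matrix.mul_assoc, ← Matrix.mul_assoc P, hPR, Matrix.zero_mul, Matrix.mul_zero]

theorem posSemidef_of_forall_trace_mul_nonneg (hA : A.IsHermitian)
    (h : ∀ Z : Matrix n n 𝕜, Z.PosSemidef → 0 ≤ (A * Z).trace) : A.PosSemidef :=
  .of_dotProduct_mulVec_nonneg hA fun v ↦ by
    simpa [mul_vecMulVec, trace_vecMulVec, dotProduct_comm] using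
      h _ (posSemidef_vecMulVec_self_star v)

theorem range_mulVecLin_le_range_mulVecLin_add (hA : A.PosSemidef) (hB : B.PosSemidef) :
    LinearMap.range A.mulVecLin ≤ LinearMap.range (A + B).mulVecLin := by
  classical
  obtain ⟨G, hG, hMGM⟩ := exists_isHermitian_mul_mul_eq_self (hA.add hB).1
  -- `1 - G * (A + B)` maps into the kernel of `A + B`, on which both quadratic forms vanish.
  set P : Matrix n n 𝕜 := 1 - G * (A + B) with hP
  have hMP : (A + B) * P = 0 := by
    rw [hP, Matrix.mul_sub, Matrix.mul_one, ← Matrix.mul_assoc, hMGM, sub_self]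
  have hPP : (P * Pᴴ).PosSemidef := posSemidef_self_mul_conjTranspose P
  have hsum : (A * (P * Pᴴ)).trace + (B * (P * Pᴴ)).trace = 0 := by
    rw [← trace_add, ← Matrix.add_mul, ← Matrix.mul_assoc, hMP, Matrix.zero_mul, trace_zero]
  have hAPP : A * (P * Pᴴ) = 0 := (trace_mul_eq_zero_iff_of_posSemidef hA hPP).1
    ((add_eq_zero_iff_of_nonneg (trace_mul_nonneg_of_posSemidef hA hPP)
      (trace_mul_nonneg_of_posSemidef hB hPP)).1 hsum).1
  have hAP : A = A * G * (A + B) := by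
    have := (mul_self_mul_conjTranspose_eq_zero P A).1 hAPP
    rwa [hP, Matrix.mul_sub, Matrix.mul_one, ← Matrix.mul_assoc, sub_eq_zero] at this
  refine range_mulVecLin_le_iff_exists_mul.2 ⟨G * A, ?_⟩
  simpa only [conjTranspose_mul, hA.1.eq, hG.eq, (hA.add hB).1.eq] using
    congrArg conjTranspose hAP

theorem exists_pos_posSemidef_add_smul_sub_iff (hX : X.PosSemidef) (hY : Y.PosSemidef) :
    (∃ t : ℝ, 0 < t ∧ (X + t • (X - Y)).PosSemidef) ↔
      LinearMap.range Y.mulVecLin ≤ LinearMap.range X.mulVecLin := by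
  constructor
  · rintro ⟨t, ht, hZ⟩
    have hsum : t • Y + (X + t • (X - Y)) = (1 + t) • X := by module
    calc LinearMap.range Y.mulVecLin
        = LinearMap.range (t • Y).mulVecLin := (range_mulVecLin_smul ht.ne' Y).symm
      _ ≤ LinearMap.range ((1 + t) • X).mulVecLin :=
        hsum ▸ range_mulVecLin_le_range_mulVecLin_add (hY.smul ht.le) hZ
      _ = LinearMap.range X.mulVecLin := range_mulVecLin_smul (by positivity) X
  · intro hYX
    obtain ⟨t, ht, hpos⟩ := exists_pos_posSemidef_sub_smul hX hY.1 hYX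
    refine ⟨t, ht, ?_⟩
    convert hpos.add (hX.smul ht.le) using 1
    module

theorem posSemidef_and_range_eq_iff_exists_posDef [Fintype k] [DecidableEq k]
    {Q : Matrix n k 𝕜} (hQ : Qᴴ * Q = 1) :
    X.PosSemidef ∧ LinearMap.range X.mulVecLin = LinearMap.range Q.mulVecLin ↔
      ∃ U : Matrix k k 𝕜, U.PosDef ∧ X = Q * U * Qᴴ := by
  constructor
  · rintro ⟨hX, hrange⟩
    obtain ⟨W, hW⟩ := range_mulVecLin_le_iff_exists_mul.1 hrange.le
    obtain ⟨V, hV⟩ := range_mulVecLin_le_iff_exists_mul.1 hrange.ge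
    have hXQ : X * Q * Qᴴ = X := by
      have hX_eq : X = Wᴴ * Qᴴ := by rw [← conjTranspose_mul, ← hW, hX.1.eq]
      nth_rw 1 [hX_eq]
      rw [Matrix.mul_assoc Wᴴ, hQ, Matrix.mul_one, ← hX_eq]
    have hQX : Q * Qᴴ * X = X := by
      rw [hW, Matrix.mul_assoc, ← Matrix.mul_assoc Qᴴ, hQ, Matrix.one_mul]
    have hunit : Qᴴ * X * Q * (Qᴴ * V) = 1 := by
      rw [Matrix.mul_assoc Qᴴ, Matrix.mul_assoc Qᴴ, ← Matrix.mul_assoc (X * Q), hXQ, ← hV, hQ]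
    refine ⟨Qᴴ * X * Q, ?_, ?_⟩
    · exact (hX.conjTranspose_mul_mul_same Q).posDef_iff_isUnit.2 (IsUnit.of_mul_eq_one _ hunit)
    · rw [← Matrix.mul_assoc, ← Matrix.mul_assoc, hQX, hXQ]
  · rintro ⟨U, hU, rfl⟩
    refine ⟨hU.posSemidef.mul_mul_conjTranspose_same Q, le_antisymm ?_ ?_⟩
    · exact range_mulVecLin_le_iff_exists_mul.2 ⟨U * Qᴴ, Matrix.mul_assoc ..⟩
    · refine range_mulVecLin_le_iff_exists_mul.2 ⟨Q * U⁻¹, ?_⟩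
      rw [Matrix.mul_assoc (Q * U), ← Matrix.mul_assoc Qᴴ, hQ, Matrix.one_mul, Matrix.mul_assoc,
        mul_nonsing_inv _ ((isUnit_iff_isUnit_det U).1 hU.isUnit), Matrix.mul_one]

end PosSemidef

section Spectrahedron

open scoped ComplexOrder

variable {𝕜 n E F : Type*} [RCLike 𝕜]

/-- The spectrahedron cut out of the affine subspace `f p = w` by the linear matrix inequality
`φ p ⪰ 0`; the optimal sets of both problems of a semidefinite pair have this form. -/
def spectrahedron [AddCommGroup E] [Module ℝ E] [AddCommGroup F] [Module ℝ F] (f : E →ₗ[ℝ] F)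
    (w : F) (φ : E →ₗ[ℝ] Matrix n n 𝕜) : Set E :=
  {p | f p = w ∧ (φ p).PosSemidef}

theorem convex_spectrahedron [AddCommGroup E] [Module ℝ E] [AddCommGroup F] [Module ℝ F]
    (f : E →ₗ[ℝ] F) (w : F) (φ : E →ₗ[ℝ] Matrix n n 𝕜) : Convex ℝ (spectrahedron f w φ) := by
  rintro p ⟨hfp, hp⟩ q ⟨hfq, hq⟩ s t hs ht hst
  refine ⟨?_, ?_⟩
  · rw [map_add, map_smul, map_smul, hfp, hfq, ← add_smul, hst, one_smul]
  · rw [map_add, map_smul, map_smul]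
    exact (hp.smul hs).add (hq.smul ht)

theorem mem_intrinsicInterior_spectrahedron_iff [Fintype n] [NormedAddCommGroup E]
    [NormedSpace ℝ E] [FiniteDimensional ℝ E] [AddCommGroup F] [Module ℝ F] {f : E →ₗ[ℝ] F} {w : F}
    {φ : E →ₗ[ℝ] Matrix n n 𝕜} {p : E} :
    p ∈ intrinsicInterior ℝ (spectrahedron f w φ) ↔
      p ∈ spectrahedron f w φ ∧ ∀ q ∈ spectrahedron f w φ,
        LinearMap.range (φ q).mulVecLin ≤ LinearMap.range (φ p).mulVecLin := by
  rw [mem_intrinsicInterior_iff_forall_exists_add_smul_sub_mem (convex_spectrahedron f w φ)]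
  refine and_congr_right fun ⟨hfp, hp⟩ ↦ forall₂_congr fun q ⟨hfq, hq⟩ ↦ ?_
  simp [← exists_pos_posSemidef_add_smul_sub_iff hp hq, spectrahedron, hfp, hfq]

end Spectrahedron

section ConicDuality

theorem exists_lagrange_multipliers {E ι : Type*} [AddCommGroup E] [Module ℝ E] [Fintype ι]
    (K : PointedCone ℝ E) (a : ι → E →ₗ[ℝ] ℝ) (c : E →ₗ[ℝ] ℝ) {x x₀ : E} (hx : x ∈ K)
    (hmin : ∀ z ∈ K, (∀ i, a i z = a i x) → c x ≤ c z) (hx₀ : ∀ i, a i x₀ = a i x)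
    (hslater : ∀ z, ∃ t : ℝ, 0 ≤ t ∧ t • x₀ + z ∈ K) :
    ∃ y : ι → ℝ, (∀ z ∈ K, ∑ i, y i * a i z ≤ c z) ∧ ∑ i, y i * a i x = c x := by
  set p : Submodule ℝ E := ⨅ i, LinearMap.ker (a i) with hp
  have mem_p (d : E) : d ∈ p ↔ ∀ i, a i d = 0 := by simp [hp]
  have hnonneg (d : E) (hd : d ∈ p) (hds : d ∈ K ⊔ PointedCone.hull ℝ {-x}) : 0 ≤ c d := by
    obtain ⟨z, hz, u, hu, rfl⟩ := Submodule.mem_sup.1 hds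
    obtain ⟨⟨r, hr⟩, rfl⟩ := Submodule.mem_span_singleton.1 hu
    rw [Nonneg.mk_smul, smul_neg, ← sub_eq_add_neg] at hd ⊢
    have haz (i : ι) : a i z = r * a i x := by
      simpa [sub_eq_zero] using (mem_p _).1 hd i
    have hr' : 0 < 1 + r := by positivity
    have hcz := hmin ((1 + r)⁻¹ • (x + z)) (K.smul_mem (by positivity) (K.add_mem hx hz)) fun i ↦ by
      simp only [map_smul, map_add, haz, smul_eq_mul]
      field_simp
    rw [map_smul, map_add, smul_eq_mul, le_inv_mul_iff₀ hr'] at hcz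
    rw [map_sub, map_smul, smul_eq_mul]
    linarith
  obtain ⟨g, hgc, hg⟩ := riesz_extension (K ⊔ PointedCone.hull ℝ {-x}) ⟨p, c.domRestrict p⟩
    (fun d hd ↦ hnonneg d d.2 hd) fun z ↦ by
      obtain ⟨t, ht, htz⟩ := hslater z
      refine ⟨⟨t • (x₀ - x), (mem_p _).2 fun i ↦ by simp [hx₀ i]⟩, ?_⟩
      convert Submodule.add_mem_sup htz (PointedCone.smul_mem _ ht
        (PointedCone.subset_hull (mem_singleton (-x)))) using 1
      module
  obtain ⟨y, hy⟩ := (Submodule.mem_span_range_iff_exists_fun ℝ).1 <|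
    mem_span_of_iInf_ker_le_ker (L := a) (K := c - g) fun d hd ↦ by
      simpa [sub_eq_zero] using (hgc ⟨d, hd⟩).symm
  have hsum (z : E) : ∑ i, y i * a i z = c z - g z := by
    simpa using LinearMap.congr_fun hy z
  have hgK (z : E) (hz : z ∈ K) : 0 ≤ g z := hg z (Submodule.mem_sup_left hz)
  have hgx : g x ≤ 0 := by
    simpa using hg (-x) (Submodule.mem_sup_right (PointedCone.subset_hull (mem_singleton _)))
  refine ⟨y, fun z hz ↦ ?_, ?_⟩
  · rw [hsum]
    linarith [hgK z hz]
  · rw [hsum]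
    linarith [hgK x hx]

end ConicDuality

section SemidefiniteOptimization

variable {n m : ℕ} {C Cbar : Matrix (Fin n) (Fin n) ℝ} {A : Fin m → Matrix (Fin n) (Fin n) ℝ}
  {b : Fin m → ℝ} {ε : ℝ} {X Y S T : Matrix (Fin n) (Fin n) ℝ} {y z : Fin m → ℝ}

theorem primalFeasible_iff_s3 :
    PrimalFeasible A b X ↔ (∀ i, (A i * X).trace = b i) ∧ X.PosSemidef :=
  and_iff_right_of_imp fun h ↦ isHermitian_iff_isSymm.1 h.2.1

theorem dualFeasible_iff_s3 :
    DualFeasible C Cbar A ε y S ↔ (∑ i, y i • A i) + S = C + ε • Cbar ∧ S.PosSemidef :=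
  and_iff_right_of_imp fun h ↦ isHermitian_iff_isSymm.1 h.2.1

theorem trace_mul_eq_sum_add_trace_mul (hX : PrimalFeasible A b X)
    (hS : DualFeasible C Cbar A ε y S) :
    ((C + ε • Cbar) * X).trace = ∑ i, b i * y i + (S * X).trace := by
  rw [← hS.2.1, Matrix.add_mul, trace_add, Finset.sum_mul, trace_sum]
  simp only [smul_mul, trace_smul, hX.2.1, smul_eq_mul, mul_comm]

theorem trace_mul_nonneg_of_feasible (hX : PrimalFeasible A b X)
    (hS : DualFeasible C Cbar A ε y S) : 0 ≤ (S * X).trace :=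
  trace_mul_nonneg_of_posSemidef hS.2.2 hX.2.2

theorem mem_primalOpt_iff (hX : PrimalFeasible A b X) (hS : DualFeasible C Cbar A ε y S)
    (hSX : S * X = 0) :
    Y ∈ PrimalOpt C Cbar A b ε ↔ PrimalFeasible A b Y ∧ S * Y = 0 := by
  refine and_congr_right fun hY ↦ ?_
  rw [← trace_mul_eq_zero_iff_of_posSemidef hS.2.2 hY.2.2]
  constructor
  · intro hopt
    have hYX := hopt X hX
    rw [trace_mul_eq_sum_add_trace_mul hX hS, trace_mul_eq_sum_add_trace_mul hY hS, hSX,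
      trace_zero] at hYX
    linarith [trace_mul_nonneg_of_feasible hY hS]
  · intro hSY Z hZ
    rw [trace_mul_eq_sum_add_trace_mul hY hS, trace_mul_eq_sum_add_trace_mul hZ hS, hSY]
    linarith [trace_mul_nonneg_of_feasible hZ hS]

theorem mem_dualOpt_iff (hX : PrimalFeasible A b X) (hS : DualFeasible C Cbar A ε y S)
    (hSX : S * X = 0) :
    (z, T) ∈ DualOpt C Cbar A b ε ↔ DualFeasible C Cbar A ε z T ∧ T * X = 0 := by
  refine and_congr_right fun hT ↦ ?_
  rw [← trace_mul_eq_zero_iff_of_posSemidef hT.2.2 hX.2.2]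
  have hSX_trace : (S * X).trace = 0 := by rw [hSX, trace_zero]
  have hobj_S := trace_mul_eq_sum_add_trace_mul hX hS
  have hobj_T := trace_mul_eq_sum_add_trace_mul hX hT
  constructor
  · intro hopt
    linarith [hopt y S hS, trace_mul_nonneg_of_feasible hX hT]
  · intro hTX y' S' hS'
    linarith [trace_mul_eq_sum_add_trace_mul hX hS', trace_mul_nonneg_of_feasible hX hS']

open scoped Matrix.Norms.Elementwise in
theorem mem_intrinsicInterior_primalOpt_iff (hX : PrimalFeasible A b X)
    (hS : DualFeasible C Cbar A ε y S) (hSX : S * X = 0) :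
    Y ∈ intrinsicInterior ℝ (PrimalOpt C Cbar A b ε) ↔
      Y ∈ PrimalOpt C Cbar A b ε ∧ ∀ Z ∈ PrimalOpt C Cbar A b ε,
        LinearMap.range Z.mulVecLin ≤ LinearMap.range Y.mulVecLin := by
  let constraint : Matrix (Fin n) (Fin n) ℝ →ₗ[ℝ] Fin m → ℝ :=
    LinearMap.pi fun i ↦ traceLinearMap (Fin n) ℝ ℝ ∘ₗ LinearMap.mulLeft ℝ (A i)
  have hspec : PrimalOpt C Cbar A b ε =
      spectrahedron (constraint.prod (LinearMap.mulLeft ℝ S)) (b, 0) .id := by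
    ext Z
    rw [mem_primalOpt_iff hX hS hSX, primalFeasible_iff_s3, and_right_comm]
    simp [spectrahedron, constraint, Prod.ext_iff, funext_iff]
  rw [hspec]
  exact mem_intrinsicInterior_spectrahedron_iff

open scoped Matrix.Norms.Elementwise in
theorem mem_intrinsicInterior_dualOpt_iff (hX : PrimalFeasible A b X)
    (hS : DualFeasible C Cbar A ε y S) (hSX : S * X = 0) :
    (z, T) ∈ intrinsicInterior ℝ (DualOpt C Cbar A b ε) ↔
      (z, T) ∈ DualOpt C Cbar A b ε ∧ ∀ z' T', (z', T') ∈ DualOpt C Cbar A b ε →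
        LinearMap.range T'.mulVecLin ≤ LinearMap.range T.mulVecLin := by
  have hspec : DualOpt C Cbar A b ε =
      spectrahedron (((Fintype.linearCombination ℝ A).coprod .id).prod
        (LinearMap.mulRight ℝ X ∘ₗ LinearMap.snd ℝ (Fin m → ℝ) _)) (C + ε • Cbar, 0)
        (LinearMap.snd ℝ (Fin m → ℝ) (Matrix (Fin n) (Fin n) ℝ)) := by
    ext ⟨z, T⟩
    rw [mem_dualOpt_iff hX hS hSX, dualFeasible_iff_s3, and_right_comm]
    simp [spectrahedron, Prod.ext_iff, Fintype.linearCombination_apply]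
  rw [hspec]
  exact mem_intrinsicInterior_spectrahedron_iff.trans (and_congr_right' Prod.forall)

open scoped MatrixOrder in
theorem exists_dualFeasible_mul_eq_zero (hC : (C + ε • Cbar).IsSymm) (hA : ∀ i, (A i).IsSymm)
    (hX : X ∈ PrimalOpt C Cbar A b ε) {X₀ : Matrix (Fin n) (Fin n) ℝ}
    (hX₀ : PrimalFeasible A b X₀) (hX₀_pos : X₀.PosDef) :
    ∃ y S, DualFeasible C Cbar A ε y S ∧ S * X = 0 := by
  let ι := (selfAdjoint.submodule ℝ (Matrix (Fin n) (Fin n) ℝ)).subtype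
  let traceMul (M : Matrix (Fin n) (Fin n) ℝ) :=
    traceLinearMap (Fin n) ℝ ℝ ∘ₗ LinearMap.mulLeft ℝ M ∘ₗ ι
  obtain ⟨y, hy, hyX⟩ := exists_lagrange_multipliers ((PointedCone.positive ℝ _).comap ι)
    (fun i ↦ traceMul (A i)) (traceMul (C + ε • Cbar)) (x := ⟨X, hX.1.2.2.1⟩)
    (x₀ := ⟨X₀, hX₀_pos.1⟩) (nonneg_iff_posSemidef.2 hX.1.2.2)
    (fun Z hZ hZX ↦ hX.2 Z <| primalFeasible_iff_s3.2
      ⟨fun i ↦ (hZX i).trans (hX.1.2.1 i), nonneg_iff_posSemidef.1 hZ⟩)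
    (fun i ↦ (hX₀.2.1 i).trans (hX.1.2.1 i).symm) fun Z ↦ by
      obtain ⟨t, ht, htZ⟩ := exists_pos_posSemidef_smul_add hX₀_pos Z.2
      exact ⟨t, ht.le, nonneg_iff_posSemidef.2 htZ⟩
  set S := C + ε • Cbar - ∑ i, y i • A i with hS_def
  have trace_S_mul (Z : Matrix (Fin n) (Fin n) ℝ) : (S * Z).trace =
      ((C + ε • Cbar) * Z).trace - ∑ i, y i * (A i * Z).trace := by
    rw [hS_def, Matrix.sub_mul, trace_sub, Finset.sum_mul, trace_sum]
    simp only [smul_mul, trace_smul, smul_eq_mul]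
  have hS_symm : S.IsSymm := hC.sub <| by
    simp only [IsSymm, transpose_sum, transpose_smul, (hA _).eq]
  have hS : S.PosSemidef :=
    posSemidef_of_forall_trace_mul_nonneg (isHermitian_iff_isSymm.2 hS_symm) fun Z hZ ↦ by
      rw [trace_S_mul, sub_nonneg]
      exact hy ⟨Z, hZ.1⟩ (nonneg_iff_posSemidef.2 hZ)
  refine ⟨y, S, dualFeasible_iff_s3.2 ⟨add_sub_cancel _ _, hS⟩, ?_⟩
  rw [← trace_mul_eq_zero_iff_of_posSemidef hS hX.1.2.2, trace_S_mul, sub_eq_zero]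
  exact hyX.symm

theorem mul_eq_zero_of_mem_primalOpt_of_mem_dualOpt (hSA : StandingAssumptions C Cbar A b)
    (hX : X ∈ PrimalOpt C Cbar A b ε) (hS : (y, S) ∈ DualOpt C Cbar A b ε) : S * X = 0 := by
  obtain ⟨hC, hCbar, hA, -, X₀, -, -, hX₀, hX₀_pos, -⟩ := hSA
  obtain ⟨z, T, hT, hTX⟩ :=
    exists_dualFeasible_mul_eq_zero (hC.add (hCbar.smul ε)) hA hX hX₀ hX₀_pos
  exact ((mem_dualOpt_iff hX.1 hT hTX).1 hS).2

theorem maxComp_iff (hX : PrimalFeasible A b X) (hS : DualFeasible C Cbar A ε y S)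
    (hSX : S * X = 0) :
    MaxComp C Cbar A b ε Y z T ↔
      (Y ∈ PrimalOpt C Cbar A b ε ∧ ∀ Z ∈ PrimalOpt C Cbar A b ε,
        LinearMap.range Z.mulVecLin ≤ LinearMap.range Y.mulVecLin) ∧
      (z, T) ∈ DualOpt C Cbar A b ε ∧ ∀ z' T', (z', T') ∈ DualOpt C Cbar A b ε →
        LinearMap.range T'.mulVecLin ≤ LinearMap.range T.mulVecLin :=
  and_congr (mem_intrinsicInterior_primalOpt_iff hX hS hSX)
    (mem_intrinsicInterior_dualOpt_iff hX hS hSX)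

variable {εbar : ℝ} {Xb Sb : Matrix (Fin n) (Fin n) ℝ} {yb : Fin m → ℝ}

-- For small `t`, the step from `(yb, Sb)` along `t • (z - y, T - S)` stays optimal at `εbar`.
theorem range_mulVecLin_le_of_dualFeasible (hXb : PrimalFeasible A b Xb)
    (hSb : DualFeasible C Cbar A εbar yb Sb) (hcomp : Sb * Xb = 0)
    (hmax : ∀ z' T', (z', T') ∈ DualOpt C Cbar A b εbar →
      LinearMap.range T'.mulVecLin ≤ LinearMap.range Sb.mulVecLin)
    (hS : DualFeasible C Cbar A ε y S)
    (hrange : LinearMap.range S.mulVecLin ≤ LinearMap.range Sb.mulVecLin)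
    (hT : DualFeasible C Cbar A ε z T) (hTXb : T * Xb = 0) :
    LinearMap.range T.mulVecLin ≤ LinearMap.range Sb.mulVecLin := by
  have hSXb : S * Xb = 0 :=
    mul_eq_zero_of_range_mulVecLin_le_of_isHermitian hSb.2.2.1 hS.2.2.1 hrange hcomp
  obtain ⟨t, ht, hpos⟩ := exists_pos_posSemidef_sub_smul hSb.2.2 hS.2.2.1 hrange
  have htT : (t • T).PosSemidef := hT.2.2.smul ht.le
  have hfeas : DualFeasible C Cbar A εbar (yb + t • (z - y)) (t • T + (Sb - t • S)) := by
    have hyb := hSb.2.1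
    have hz := hT.2.1
    have hy := hS.2.1
    refine dualFeasible_iff_s3.2 ⟨?_, htT.add hpos⟩
    simp only [← Fintype.linearCombination_apply ℝ A, map_add, map_smul, map_sub] at hyb hz hy ⊢
    linear_combination (norm := module) hyb + t • (hz - hy)
  have hopt := (mem_dualOpt_iff hXb hSb hcomp).2 ⟨hfeas, by
    simp [Matrix.add_mul, Matrix.sub_mul, hTXb, hcomp, hSXb]⟩
  calc LinearMap.range T.mulVecLin = LinearMap.range (t • T).mulVecLin :=
        (range_mulVecLin_smul ht.ne' T).symm
    _ ≤ LinearMap.range (t • T + (Sb - t • S)).mulVecLin :=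
        range_mulVecLin_le_range_mulVecLin_add htT hpos
    _ ≤ LinearMap.range Sb.mulVecLin := hmax _ _ hopt

theorem range_mulVecLin_eq_of_maxComp (hX : PrimalFeasible A b X)
    (hS : DualFeasible C Cbar A ε y S) (hSX : S * X = 0) {X₁ X₂ S₁ S₂ : Matrix (Fin n) (Fin n) ℝ}
    {y₁ y₂ : Fin m → ℝ} (h₁ : MaxComp C Cbar A b ε X₁ y₁ S₁)
    (h₂ : MaxComp C Cbar A b ε X₂ y₂ S₂) :
    LinearMap.range X₁.mulVecLin = LinearMap.range X₂.mulVecLin ∧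
      LinearMap.range S₁.mulVecLin = LinearMap.range S₂.mulVecLin := by
  obtain ⟨⟨hX₁, hX₁_max⟩, hS₁, hS₁_max⟩ := (maxComp_iff hX hS hSX).1 h₁
  obtain ⟨⟨hX₂, hX₂_max⟩, hS₂, hS₂_max⟩ := (maxComp_iff hX hS hSX).1 h₂
  exact ⟨(hX₂_max _ hX₁).antisymm (hX₁_max _ hX₂), (hS₂_max _ _ hS₁).antisymm (hS₁_max _ _ hS₂)⟩

theorem maxComp_of_range_mulVecLin_eq (hmc : MaxComp C Cbar A b εbar Xb yb Sb)
    (hcomp : Sb * Xb = 0) (hX : PrimalFeasible A b X) (hS : DualFeasible C Cbar A ε y S)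
    (hrangeX : LinearMap.range X.mulVecLin = LinearMap.range Xb.mulVecLin)
    (hrangeS : LinearMap.range S.mulVecLin = LinearMap.range Sb.mulVecLin) :
    MaxComp C Cbar A b ε X y S := by
  have hXb := (intrinsicInterior_subset hmc.1).1
  have hSb := (intrinsicInterior_subset hmc.2).1
  obtain ⟨⟨-, hXb_max⟩, -, hSb_max⟩ := (maxComp_iff hXb hSb hcomp).1 hmc
  have hSX : S * X = 0 := mul_eq_zero_of_range_mulVecLin_le hrangeX.le <|
    mul_eq_zero_of_range_mulVecLin_le_of_isHermitian hSb.2.2.1 hS.2.2.1 hrangeS.le hcomp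
  refine (maxComp_iff hX hS hSX).2 ⟨⟨(mem_primalOpt_iff hX hS hSX).2 ⟨hX, hSX⟩, ?_⟩,
    (mem_dualOpt_iff hX hS hSX).2 ⟨hS, hSX⟩, ?_⟩
  · intro Y hY
    obtain ⟨hY, hSY⟩ := (mem_primalOpt_iff hX hS hSX).1 hY
    have hSbY : Sb * Y = 0 :=
      mul_eq_zero_of_range_mulVecLin_le_of_isHermitian hS.2.2.1 hSb.2.2.1 hrangeS.ge hSY
    rw [hrangeX]
    exact hXb_max Y ((mem_primalOpt_iff hXb hSb hcomp).2 ⟨hY, hSbY⟩)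
  · intro z T hT
    obtain ⟨hT, hTX⟩ := (mem_dualOpt_iff hX hS hSX).1 hT
    rw [hrangeS]
    exact range_mulVecLin_le_of_dualFeasible hXb hSb hcomp hSb_max hS hrangeS.le hT
      (mul_eq_zero_of_range_mulVecLin_le hrangeX.ge hTX)

theorem samePartition_iff_exists_range_eq (hmc : MaxComp C Cbar A b εbar Xb yb Sb)
    (hcomp : Sb * Xb = 0) :
    SamePartition C Cbar A b ε εbar ↔ ∃ X y S,
      PrimalFeasible A b X ∧ DualFeasible C Cbar A ε y S ∧
        LinearMap.range X.mulVecLin = LinearMap.range Xb.mulVecLin ∧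
        LinearMap.range S.mulVecLin = LinearMap.range Sb.mulVecLin := by
  constructor
  · rintro ⟨X, y, S, X', y', S', h, h', hrangeX, hrangeS⟩
    obtain ⟨hX', hS'⟩ := range_mulVecLin_eq_of_maxComp (intrinsicInterior_subset hmc.1).1
      (intrinsicInterior_subset hmc.2).1 hcomp h' hmc
    exact ⟨X, y, S, (intrinsicInterior_subset h.1).1, (intrinsicInterior_subset h.2).1,
      hrangeX.trans hX', hrangeS.trans hS'⟩
  · rintro ⟨X, y, S, hX, hS, hrangeX, hrangeS⟩
    exact ⟨X, y, S, Xb, yb, Sb, maxComp_of_range_mulVecLin_eq hmc hcomp hX hS hrangeX hrangeS,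
      hmc, hrangeX, hrangeS⟩

end SemidefiniteOptimization

theorem stmt3_general {n m : ℕ} {C Cbar : Matrix (Fin n) (Fin n) ℝ}
    {A : Fin m → Matrix (Fin n) (Fin n) ℝ} {b : Fin m → ℝ} {εbar : ℝ}
    {Xb Sb : Matrix (Fin n) (Fin n) ℝ} {yb : Fin m → ℝ}
    (hmc : MaxComp C Cbar A b εbar Xb yb Sb) (hcomp : Sb * Xb = 0)
    {kB kN : ℕ} {QB : Matrix (Fin n) (Fin kB) ℝ} {QN : Matrix (Fin n) (Fin kN) ℝ}
    (hQBorth : QBᵀ * QB = 1)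
    (hQBrange : LinearMap.range QB.mulVecLin = LinearMap.range Xb.mulVecLin)
    (hQNorth : QNᵀ * QN = 1)
    (hQNrange : LinearMap.range QN.mulVecLin = LinearMap.range Sb.mulVecLin) (ε : ℝ) :
    SamePartition C Cbar A b ε εbar ↔
      ∃ (UX : Matrix (Fin kB) (Fin kB) ℝ) (y : Fin m → ℝ) (US : Matrix (Fin kN) (Fin kN) ℝ),
        UX.PosDef ∧ US.PosDef ∧
        (∀ i, ((A i) * (QB * UX * QBᵀ)).trace = b i) ∧
        (∑ i, y i • A i) + QN * US * QNᵀ = C + ε • Cbar := by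
  rw [samePartition_iff_exists_range_eq hmc hcomp, ← hQBrange, ← hQNrange]
  simp only [primalFeasible_iff_s3, dualFeasible_iff_s3]
  rw [← conjTranspose_eq_transpose_of_trivial] at hQBorth hQNorth
  have hB {X} := posSemidef_and_range_eq_iff_exists_posDef hQBorth (X := X)
  have hN {S} := posSemidef_and_range_eq_iff_exists_posDef hQNorth (X := S)
  simp only [conjTranspose_eq_transpose_of_trivial] at hB hN
  constructor
  · rintro ⟨X, y, S, ⟨hAX, hX⟩, ⟨hAS, hS⟩, hrangeX, hrangeS⟩
    obtain ⟨UX, hUX, rfl⟩ := hB.1 ⟨hX, hrangeX⟩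
    obtain ⟨US, hUS, rfl⟩ := hN.1 ⟨hS, hrangeS⟩
    exact ⟨UX, y, US, hUX, hUS, hAX, hAS⟩
  · rintro ⟨UX, y, US, hUX, hUS, hAX, hAS⟩
    obtain ⟨hX, hrangeX⟩ := hB.2 ⟨UX, hUX, rfl⟩
    obtain ⟨hS, hrangeS⟩ := hN.2 ⟨US, hUS, rfl⟩
    exact ⟨_, y, _, ⟨hAX, hX⟩, ⟨hAS, hS⟩, hrangeX, hrangeS⟩

/-- characterization of the invariancy set of `ε̄` via the auxiliary system. -/
theorem stmt3 {n m : ℕ} (C Cbar : Matrix (Fin n) (Fin n) ℝ)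
    (A : Fin m → Matrix (Fin n) (Fin n) ℝ) (b : Fin m → ℝ)
    (hSA : StandingAssumptions C Cbar A b)
    (εbar : ℝ) (hεbar : εbar ∈ interior (Eset C Cbar A b))
    (Xb Sb : Matrix (Fin n) (Fin n) ℝ) (yb : Fin m → ℝ)
    (hmc : MaxComp C Cbar A b εbar Xb yb Sb)
    (kB kN : ℕ) (QB : Matrix (Fin n) (Fin kB) ℝ) (QN : Matrix (Fin n) (Fin kN) ℝ)
    (hQBorth : QBᵀ * QB = 1)
    (hQBrange : LinearMap.range QB.mulVecLin = LinearMap.range Xb.mulVecLin)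
    (hQNorth : QNᵀ * QN = 1)
    (hQNrange : LinearMap.range QN.mulVecLin = LinearMap.range Sb.mulVecLin)
    (ε : ℝ) (hε : ε ∈ interior (Eset C Cbar A b)) :
    SamePartition C Cbar A b ε εbar ↔
      ∃ (UX : Matrix (Fin kB) (Fin kB) ℝ) (y : Fin m → ℝ) (US : Matrix (Fin kN) (Fin kN) ℝ),
        UX.PosDef ∧ US.PosDef ∧
        (∀ i, ((A i) * (QB * UX * QBᵀ)).trace = b i) ∧
        (∑ i, y i • A i) + QN * US * QNᵀ = C + ε • Cbar :=
  stmt3_general hmc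
    (mul_eq_zero_of_mem_primalOpt_of_mem_dualOpt hSA (intrinsicInterior_subset hmc.1)
      (intrinsicInterior_subset hmc.2)) hQBorth hQBrange hQNorth hQNrange ε
end
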